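/- For every natural number d, there exist a real polynomial P of degree d and a nonzero entire function w : ℂ → ℂ satisfying w''(z) + P(z)·w(z) = 0 for all z ∈ ℂ, such that every zero of w is real. -/

import Mathlib

open Complex Polynomial

/-!
In even degree `2 * k`, take the zero-free function `exp (z ^ (k + 1))`. In odd degree `2 * n + 1`,
consider the equilibrium problem on `[0, ∞)` in a polynomial external field whose equilibrium
density is proportional to `t ^ n * √((t - 1) * (2 * ρ ^ 2 - 1 - t))` on `[1, 2 * ρ ^ 2 - 1]`. Its
Fekete points, being critical points of the weighted discriminant, are the zeros of a polynomial
`p` for which `w = exp Q * p` solves an equation `w'' + P * w = 0` with `P` real of degree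
`2 * n + 2` (Heine and Stieltjes).

The leading coefficient of `P` is `-(κ / ρ) ^ 2` and the next one `2 * κ ^ 2`, where `κ` measures
the strength of the field. Letting `ρ → ∞` with `κ` bounded, `P` loses exactly one degree, and a
normal-families argument yields a limit solution. Its zeros are real because away from the real
axis the normalized `w` is bounded below uniformly in `ρ`. Both the upper and the lower bounds on
`w` come from the extremality of Fekete points and the maximum principle, after pulling back to the
unit disc by the Joukowski map onto the complement of the support of the equilibrium measure.
-/

namespace FeketeODE

open scoped ComplexConjugate

section MaximumPrinciple

lemma re_le_of_forall_sphere_re_le {f : ℂ → ℂ} (hf : DiffContOnCl ℂ f (Metric.ball 0 1)) {C : ℝ}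
    (hC : ∀ ζ : ℂ, ‖ζ‖ = 1 → (f ζ).re ≤ C) {z : ℂ} (hz : ‖z‖ ≤ 1) : (f z).re ≤ C := by
  have hexp : DiffContOnCl ℂ (fun ζ ↦ exp (f ζ)) (Metric.ball 0 1) :=
    differentiable_exp.comp_diffContOnCl hf
  have := Complex.norm_le_of_forall_mem_frontier_norm_le (C := Real.exp C) Metric.isBounded_ball
    hexp (fun ζ hζ ↦ by
      rw [frontier_ball _ one_ne_zero, mem_sphere_zero_iff_norm] at hζ
      rw [norm_exp]
      exact Real.exp_le_exp.mpr (hC ζ hζ)) (z := z)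
    (by rwa [closure_ball _ one_ne_zero, mem_closedBall_zero_iff])
  rwa [norm_exp, Real.exp_le_exp] at this

end MaximumPrinciple

section Joukowski

lemma re_sq_add_im_sq_of_norm_eq_one {ζ : ℂ} (hζ : ‖ζ‖ = 1) : ζ.re ^ 2 + ζ.im ^ 2 = 1 := by
  rw [← normSq_add_mul_I, re_add_im, normSq_eq_norm_sq, hζ, one_pow]

/-- The affine Joukowski map `ζ ↦ c + h (ζ + ζ⁻¹)`, which for `h ≠ 0` sends the unit circle onto
the segment `[c - 2h, c + 2h]` and the punctured open unit disc onto its complement. -/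
noncomputable def joukowski (c h : ℝ) (ζ : ℂ) : ℂ := c + h * (ζ + ζ⁻¹)

variable {c h : ℝ} {ζ : ℂ}

lemma joukowski_of_norm_eq_one (hζ : ‖ζ‖ = 1) :
    joukowski c h ζ = ((c + 2 * h * ζ.re : ℝ) : ℂ) := by
  rw [joukowski, Complex.inv_eq_conj hζ, Complex.add_conj]
  push_cast
  ring

lemma joukowski_conj : joukowski c h (conj ζ) = conj (joukowski c h ζ) := by
  simp [joukowski]

lemma joukowski_im : (joukowski c h ζ).im = h * (ζ.im - ζ.im / normSq ζ) := by
  simp [joukowski, neg_div, sub_eq_add_neg]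

lemma im_eq_zero_or_norm_eq_one_of_joukowski_im_eq_zero (hh : h ≠ 0)
    (hζ : (joukowski c h ζ).im = 0) : ζ.im = 0 ∨ ‖ζ‖ = 1 := by
  rw [joukowski_im, mul_eq_zero, or_iff_right hh] at hζ
  by_cases him : ζ.im = 0
  · exact .inl him
  have hpos : normSq ζ ≠ 0 := by
    rw [Ne, normSq_eq_zero]
    rintro rfl
    simp at him
  have : ζ.im * (normSq ζ - 1) = 0 := by field_simp at hζ; linarith
  have hone : normSq ζ = 1 := by linarith [(mul_eq_zero.mp this).resolve_left him]
  refine .inr ?_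
  rwa [normSq_eq_norm_sq, pow_eq_one_iff_of_nonneg (norm_nonneg ζ) two_ne_zero] at hone

lemma eq_or_mul_eq_one_of_joukowski_eq {ζ' : ℂ} (hh : h ≠ 0) (h0 : ζ ≠ 0) (h0' : ζ' ≠ 0)
    (hJ : joukowski c h ζ = joukowski c h ζ') : ζ = ζ' ∨ ζ * ζ' = 1 := by
  have hsum : ζ + ζ⁻¹ = ζ' + ζ'⁻¹ := by
    simpa [joukowski, hh] using hJ
  have : (ζ - ζ') * (ζ * ζ' - 1) = 0 := by
    field_simp at hsum
    linear_combination hsum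
  rcases mul_eq_zero.mp this with hsub | hsub
  · exact .inl (sub_eq_zero.mp hsub)
  · exact .inr (sub_eq_zero.mp hsub)

end Joukowski

section ShiftedDickson

/-- The Dickson polynomials adapted to `joukowski c h`: up to the factor `h ^ k`, the `k`-th one
takes the value `ζ ^ k + ζ⁻¹ ^ k` at `joukowski c h ζ`. -/
noncomputable def shiftedDickson (c h : ℝ) (k : ℕ) : ℝ[X] :=
  (dickson 1 (h ^ 2) k).comp (X - C c)

variable (c h : ℝ)

lemma shiftedDickson_zero : shiftedDickson c h 0 = C 2 := by
  rw [shiftedDickson, dickson_zero, ← C_ofNat 3, Nat.cast_one, ← C_1, ← C_sub, C_comp]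
  norm_num

lemma shiftedDickson_one : shiftedDickson c h 1 = X - C c := by
  simp [shiftedDickson]

lemma shiftedDickson_add_two (k : ℕ) : shiftedDickson c h (k + 2) =
    (X - C c) * shiftedDickson c h (k + 1) - C (h ^ 2) * shiftedDickson c h k := by
  simp only [shiftedDickson, dickson_add_two, sub_comp, mul_comp, X_comp, C_comp]

lemma aeval_joukowski_shiftedDickson {ζ : ℂ} (hζ : ζ ≠ 0) (k : ℕ) :
    aeval (joukowski c h ζ) (shiftedDickson c h k) = (h : ℂ) ^ k * (ζ ^ k + ζ⁻¹ ^ k) := by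
  induction k using Nat.twoStepInduction with
  | zero => simp [shiftedDickson_zero, one_add_one_eq_two]
  | one => simp [shiftedDickson_one, joukowski]
  | more k ih ih' =>
    simp only [shiftedDickson_add_two, map_sub, map_mul, aeval_X, aeval_C, ih, ih',
      coe_algebraMap, ofReal_pow]
    rw [joukowski]
    linear_combination (h : ℂ) ^ (k + 2) * (ζ⁻¹ ^ k + ζ ^ k) * mul_inv_cancel₀ hζ

lemma natDegree_shiftedDickson_le (k : ℕ) : (shiftedDickson c h k).natDegree ≤ k := by
  induction k using Nat.twoStepInduction with
  | zero => simp [shiftedDickson_zero]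
  | one => simp [shiftedDickson_one]
  | more k ih ih' =>
    rw [shiftedDickson_add_two]
    refine (natDegree_sub_le _ _).trans (max_le ?_ ?_)
    · exact natDegree_mul_le.trans (by rw [natDegree_X_sub_C]; omega)
    · exact natDegree_mul_le.trans (by rw [natDegree_C]; omega)

lemma coeff_shiftedDickson_of_lt {k m : ℕ} (hkm : k < m) : (shiftedDickson c h k).coeff m = 0 :=
  coeff_eq_zero_of_natDegree_lt ((natDegree_shiftedDickson_le c h k).trans_lt hkm)

lemma coeff_shiftedDickson_succ_self (k : ℕ) : (shiftedDickson c h (k + 1)).coeff (k + 1) = 1 := by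
  induction k with
  | zero => simp [shiftedDickson_one]
  | succ k ih =>
    simp only [shiftedDickson_add_two, sub_mul, coeff_sub, coeff_X_mul, coeff_C_mul, ih,
      coeff_shiftedDickson_of_lt c h (show k < k + 1 + 1 by omega),
      coeff_shiftedDickson_of_lt c h (show k + 1 < k + 1 + 1 by omega), mul_zero, sub_zero]

lemma coeff_shiftedDickson_succ (k : ℕ) :
    (shiftedDickson c h (k + 1)).coeff k = -((k + 1 : ℕ) * c) := by
  induction k with
  | zero => simp [shiftedDickson_one, coeff_X, coeff_C]
  | succ k ih =>
    simp only [shiftedDickson_add_two, sub_mul, coeff_sub, coeff_X_mul, coeff_C_mul, ih,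
      coeff_shiftedDickson_of_lt c h (show k < k + 1 by omega), coeff_shiftedDickson_succ_self]
    push_cast
    ring

lemma natDegree_sub_shiftedDickson_le {E : ℝ[X]} {k : ℕ} (hE : E.natDegree ≤ k + 1) :
    (E - C (E.coeff (k + 1)) * shiftedDickson c h (k + 1)).natDegree ≤ k := by
  rw [natDegree_le_iff_coeff_eq_zero]
  intro m hm
  rcases (Nat.succ_le_of_lt hm).eq_or_lt with rfl | hlt
  · simp [coeff_shiftedDickson_succ_self]
  · rw [coeff_sub, coeff_C_mul, coeff_eq_zero_of_natDegree_lt (hE.trans_lt hlt),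
      coeff_shiftedDickson_of_lt c h hlt]
    simp

end ShiftedDickson

section EquilibriumPair

/-- `IsEquilibriumPair c h E N Q b` says that, in the coordinate `z = joukowski c h ζ`, the external
field `Q` splits as `b ζ + b ζ⁻¹`, and that the multivalued complex potential
`b ζ⁻¹ - b ζ - N log ζ` has logarithmic derivative `E z`. If `E` vanishes at `c ± 2h`, then
`Q` is the external field whose weighted equilibrium measure, of mass `N`, lives on
`[c - 2h, c + 2h]` with density proportional to `E z / √((z - c)² - 4h²)`. -/
structure IsEquilibriumPair (c h : ℝ) (E : ℝ[X]) (N : ℝ) (Q b : ℝ[X]) : Prop where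
  field : ∀ ζ : ℂ, ζ ≠ 0 → aeval (joukowski c h ζ) Q = aeval ζ b + aeval ζ⁻¹ b
  deriv : ∀ ζ : ℂ, ζ ≠ 0 → aeval (joukowski c h ζ) E =
    -N - ζ * aeval ζ (derivative b) - ζ⁻¹ * aeval ζ⁻¹ (derivative b)

namespace IsEquilibriumPair

variable {c h N : ℝ} {E Q b : ℝ[X]}

lemma const (c h e : ℝ) : IsEquilibriumPair c h (C e) (-e) 0 0 where
  field := by simp
  deriv := by simp

lemma smul (H : IsEquilibriumPair c h E N Q b) (κ : ℝ) :
    IsEquilibriumPair c h (C κ * E) (κ * N) (C κ * Q) (C κ * b) where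
  field ζ hζ := by simp only [map_mul, H.field ζ hζ, aeval_C]; ring
  deriv ζ hζ := by
    simp only [map_mul, H.deriv ζ hζ, derivative_C_mul, aeval_C, coe_algebraMap, ofReal_mul]
    ring

lemma add_shiftedDickson (H : IsEquilibriumPair c h E N Q b) (e : ℝ) (k : ℕ) :
    IsEquilibriumPair c h (E + C e * shiftedDickson c h (k + 1)) N
      (Q - C (e / (k + 1)) * shiftedDickson c h (k + 1))
      (b - C (e / (k + 1) * h ^ (k + 1)) * X ^ (k + 1)) where
  field ζ hζ := by
    simp only [map_sub, map_mul, aeval_C, H.field ζ hζ, aeval_joukowski_shiftedDickson c h hζ,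
      map_pow, aeval_X, coe_algebraMap]
    ring
  deriv ζ hζ := by
    have he : (e / (k + 1) * (k + 1) : ℂ) = e :=
      div_mul_cancel₀ _ (by exact_mod_cast k.succ_ne_zero)
    rw [derivative_sub, derivative_C_mul, derivative_X_pow]
    simp only [map_add, map_sub, map_mul, aeval_C, H.deriv ζ hζ,
      aeval_joukowski_shiftedDickson c h hζ, coe_algebraMap, map_pow, aeval_X, map_natCast,
      Nat.add_sub_cancel]
    push_cast
    linear_combination -(h : ℂ) ^ (k + 1) * (ζ ^ (k + 1) + ζ⁻¹ ^ (k + 1)) * he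

lemma exists_of_natDegree_le (c h : ℝ) (K : ℕ) {E : ℝ[X]} (hE : E.natDegree ≤ K) :
    ∃ N Q b, Q.natDegree ≤ K ∧ IsEquilibriumPair c h E N Q b := by
  induction K generalizing E with
  | zero =>
    rw [eq_C_of_natDegree_le_zero hE]
    exact ⟨_, 0, 0, by simp, const c h _⟩
  | succ K ih =>
    obtain ⟨N, Q, b, hQ, H⟩ := ih (natDegree_sub_shiftedDickson_le c h hE)
    have H' := H.add_shiftedDickson (E.coeff (K + 1)) K
    rw [sub_add_cancel] at H'
    refine ⟨_, _, _, (natDegree_sub_le _ _).trans (max_le (by omega) ?_), H'⟩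
    exact (natDegree_C_mul_le _ _).trans (natDegree_shiftedDickson_le c h _)

lemma exists_coeff_eq (c h : ℝ) (n : ℕ) {E : ℝ[X]} (hE : E.natDegree ≤ n + 2) :
    ∃ N Q b, Q.natDegree ≤ n + 2 ∧ Q.coeff (n + 2) * (n + 2) = -E.coeff (n + 2) ∧
      Q.coeff (n + 1) * (n + 1) = -(E.coeff (n + 1) + E.coeff (n + 2) * c) ∧
      IsEquilibriumPair c h E N Q b := by
  set E₁ := E - C (E.coeff (n + 2)) * shiftedDickson c h (n + 2) with hE₁
  have hdeg : E₁.natDegree ≤ n + 1 := natDegree_sub_shiftedDickson_le c h hE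
  have hcoeff : E₁.coeff (n + 1) = E.coeff (n + 1) + E.coeff (n + 2) * ((n + 2) * c) := by
    rw [hE₁, coeff_sub, coeff_C_mul, coeff_shiftedDickson_succ]
    push_cast
    ring
  obtain ⟨N, Q, b, hQ, H⟩ :=
    exists_of_natDegree_le c h n (natDegree_sub_shiftedDickson_le c h hdeg)
  have H' := (H.add_shiftedDickson (E₁.coeff (n + 1)) n).add_shiftedDickson
    (E.coeff (n + 2)) (n + 1)
  rw [sub_add_cancel, hE₁, sub_add_cancel, ← hE₁] at H'
  have hn : (n : ℝ) + 1 ≠ 0 := by positivity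
  have hn' : (n : ℝ) + 1 + 1 ≠ 0 := by positivity
  refine ⟨_, _, _, ?_, ?_, ?_, H'⟩
  · refine (natDegree_sub_le _ _).trans (max_le ((natDegree_sub_le _ _).trans (max_le ?_ ?_)) ?_)
    · omega
    · exact (natDegree_C_mul_le _ _).trans ((natDegree_shiftedDickson_le c h _).trans (by omega))
    · exact (natDegree_C_mul_le _ _).trans (natDegree_shiftedDickson_le c h _)
  · simp only [coeff_sub, coeff_C_mul, coeff_shiftedDickson_succ_self,
      coeff_shiftedDickson_of_lt c h (show n + 1 < n + 2 by omega),
      coeff_eq_zero_of_natDegree_lt (show Q.natDegree < n + 2 by omega)]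
    push_cast
    field_simp
    ring
  · simp only [coeff_sub, coeff_C_mul, coeff_shiftedDickson_succ_self, coeff_shiftedDickson_succ,
      coeff_eq_zero_of_natDegree_lt (show Q.natDegree < n + 1 by omega), hcoeff]
    push_cast
    field_simp
    ring

lemma aeval_joukowski_of_norm_eq_one (H : IsEquilibriumPair c h E N Q b) {ζ : ℂ} (hζ : ‖ζ‖ = 1) :
    (aeval (joukowski c h ζ) E).re = -N - 2 * (ζ * aeval ζ (derivative b)).re := by
  have hζ0 : ζ ≠ 0 := norm_ne_zero_iff.mp (by simp [hζ])
  rw [H.deriv ζ hζ0, Complex.inv_eq_conj hζ, aeval_conj, ← map_mul]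
  simp only [sub_re, neg_re, ofReal_re, conj_re]
  ring

/-- `N` is minus the mean of `E ∘ joukowski c h` over the unit circle, and `ζ.im ^ 2` has
mean `1 / 2`. -/
lemma le_mass (H : IsEquilibriumPair c h E N Q b) {s : ℝ}
    (hs : ∀ ζ : ℂ, ‖ζ‖ = 1 → (aeval (joukowski c h ζ) E).re ≤ -(s * ζ.im ^ 2)) : s / 2 ≤ N := by
  have hb := Polynomial.differentiable_aeval (𝕜 := ℂ) (derivative b)
  have hf : Differentiable ℂ
      fun ζ : ℂ ↦ -2 * (ζ * aeval ζ (derivative b)) - (s / 2 : ℝ) * (ζ ^ 2 - 1) := by fun_prop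
  have := re_le_of_forall_sphere_re_le hf.diffContOnCl (C := N) (z := 0) (fun ζ hζ ↦ ?_) (by simp)
  · simpa using this
  have hE := hs ζ hζ
  rw [H.aeval_joukowski_of_norm_eq_one hζ] at hE
  have hnorm := re_sq_add_im_sq_of_norm_eq_one hζ
  have hre : (-2 * (ζ * aeval ζ (derivative b)) - (s / 2 : ℝ) * (ζ ^ 2 - 1)).re =
      -2 * (ζ * aeval ζ (derivative b)).re - s / 2 * (ζ.re ^ 2 - ζ.im ^ 2 - 1) := by
    rw [sub_re, re_ofReal_mul, sub_re, one_re, ← neg_mul_eq_neg_mul, neg_re,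
      ← ofReal_ofNat, re_ofReal_mul, sq ζ, mul_re ζ ζ]
    ring
  rw [hre]
  linear_combination hE - s / 2 * hnorm

end IsEquilibriumPair

end EquilibriumPair

section EquilibriumField

/-- The polynomial `z ^ n (z - 1) (z - (2ρ² - 1))`; its quotient by `√((z - 1) (z - (2ρ² - 1)))`
is the density prescribed on the cut `[1, 2ρ² - 1]`. -/
noncomputable def densityPoly (n : ℕ) (ρ : ℝ) : ℝ[X] :=
  X ^ n * ((X - 1) * (X - C (2 * ρ ^ 2 - 1)))

lemma aeval_densityPoly (n : ℕ) (ρ : ℝ) (z : ℂ) :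
    aeval z (densityPoly n ρ) = z ^ n * ((z - 1) * (z - (2 * ρ ^ 2 - 1 : ℝ))) := by
  simp [densityPoly]

lemma natDegree_densityPoly_le (n : ℕ) (ρ : ℝ) : (densityPoly n ρ).natDegree ≤ n + 2 := by
  unfold densityPoly
  compute_degree

lemma densityPoly_eq (n : ℕ) (ρ : ℝ) : densityPoly n ρ =
    X ^ (n + 2) - C (2 * ρ ^ 2) * X ^ (n + 1) + C (2 * ρ ^ 2 - 1) * X ^ n := by
  simp only [densityPoly, C_sub, C_1]
  ring

lemma coeff_densityPoly_top (n : ℕ) (ρ : ℝ) : (densityPoly n ρ).coeff (n + 2) = 1 := by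
  rw [densityPoly_eq, coeff_add, coeff_sub, coeff_C_mul, coeff_C_mul]
  simp [coeff_X_pow]

lemma coeff_densityPoly_sub (n : ℕ) (ρ : ℝ) : (densityPoly n ρ).coeff (n + 1) = -(2 * ρ ^ 2) := by
  rw [densityPoly_eq, coeff_add, coeff_sub, coeff_C_mul, coeff_C_mul]
  simp [coeff_X_pow]

/-- The Joukowski map from the unit disc onto the complement of the cut `[1, 2ρ² - 1]`. -/
noncomputable def cutMap (ρ : ℝ) : ℂ → ℂ := joukowski (ρ ^ 2) ((ρ ^ 2 - 1) / 2)

lemma cutMap_of_norm_eq_one (ρ : ℝ) {ζ : ℂ} (hζ : ‖ζ‖ = 1) :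
    cutMap ρ ζ = ((ρ ^ 2 + (ρ ^ 2 - 1) * ζ.re : ℝ) : ℂ) := by
  rw [cutMap, joukowski_of_norm_eq_one hζ]
  push_cast
  ring

lemma one_le_cutMap_re {ρ : ℝ} (hρ : 1 ≤ ρ ^ 2) {ζ : ℂ} (hζ : ‖ζ‖ = 1) :
    1 ≤ ρ ^ 2 + (ρ ^ 2 - 1) * ζ.re := by
  have := (abs_le.mp ((abs_re_le_norm ζ).trans_eq hζ)).1
  nlinarith

lemma aeval_cutMap_densityPoly (n : ℕ) (ρ : ℝ) {ζ : ℂ} (hζ : ‖ζ‖ = 1) :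
    aeval (cutMap ρ ζ) (densityPoly n ρ) =
      (-((ρ ^ 2 + (ρ ^ 2 - 1) * ζ.re) ^ n * ((ρ ^ 2 - 1) ^ 2 * ζ.im ^ 2)) : ℝ) := by
  rw [aeval_densityPoly, cutMap_of_norm_eq_one ρ hζ,
    eq_sub_of_add_eq' (re_sq_add_im_sq_of_norm_eq_one hζ)]
  push_cast
  ring

/-- An external field `Q` of degree `n + 2` on `[0, ∞)` whose weighted equilibrium measure has
integral mass `N` and density proportional to `t ^ n √((t - 1) (2ρ² - 1 - t))` on the cut
`[1, 2ρ² - 1]`. The number `κ` is the normalising constant; only its order of magnitude can be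
prescribed, because `N` has to be an integer. -/
structure EquilibriumField (n : ℕ) where
  ρ : ℝ
  κ : ℝ
  N : ℕ
  Q : ℝ[X]
  b : ℝ[X]
  ten_le_ρ : 10 ≤ ρ
  le_κ : 2 * n + 5 ≤ κ
  N_pos : 0 < N
  natDegree_Q_le : Q.natDegree ≤ n + 2
  coeff_Q_top : Q.coeff (n + 2) * (n + 2) = -(κ / ρ)
  coeff_Q_sub : Q.coeff (n + 1) * (n + 1) = κ * ρ
  isEquilibriumPair :
    IsEquilibriumPair (ρ ^ 2) ((ρ ^ 2 - 1) / 2) (C (κ / ρ) * densityPoly n ρ) N Q b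

namespace EquilibriumField

lemma one_le_mass {n : ℕ} {ρ N : ℝ} {Q b : ℝ[X]} (hρ : 10 ≤ ρ)
    (H : IsEquilibriumPair (ρ ^ 2) ((ρ ^ 2 - 1) / 2) (C ρ⁻¹ * densityPoly n ρ) N Q b) : 1 ≤ N := by
  have hρsq : 1 ≤ ρ ^ 2 := by nlinarith
  have hmass : ρ⁻¹ * (ρ ^ 2 - 1) ^ 2 / 2 ≤ N := H.le_mass fun ζ hζ ↦ by
    rw [← cutMap, map_mul, aeval_cutMap_densityPoly n ρ hζ, aeval_C, coe_algebraMap,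
      ← ofReal_mul, ofReal_re, mul_neg, mul_assoc]
    refine neg_le_neg (mul_le_mul_of_nonneg_left ?_ (by positivity))
    exact le_mul_of_one_le_left (by positivity) (one_le_pow₀ (one_le_cutMap_re hρsq hζ))
  refine le_trans ?_ hmass
  rw [inv_mul_eq_div, div_div, one_le_div (by positivity)]
  nlinarith [mul_nonneg (sub_nonneg.mpr hρ) (sub_nonneg.mpr hρ)]

lemma exists_ρ_eq (n : ℕ) {κ₀ ρ : ℝ} (hκ₀ : 2 * n + 5 ≤ κ₀) (hρ : 10 ≤ ρ) :
    ∃ E : EquilibriumField n, E.ρ = ρ ∧ κ₀ ≤ E.κ ∧ E.κ ≤ 2 * κ₀ := by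
  obtain ⟨N₁, Q, b, hdeg, htop, hsub, H⟩ := IsEquilibriumPair.exists_coeff_eq (ρ ^ 2)
    ((ρ ^ 2 - 1) / 2) n ((natDegree_C_mul_le ρ⁻¹ _).trans (natDegree_densityPoly_le n ρ))
  rw [coeff_C_mul, coeff_densityPoly_top, mul_one] at htop
  rw [coeff_C_mul, coeff_C_mul, coeff_densityPoly_top, coeff_densityPoly_sub] at hsub
  have hN₁ : 1 ≤ N₁ := one_le_mass hρ H
  have hκ₀1 : 1 ≤ κ₀ := le_trans (by linarith [n.cast_nonneg (α := ℝ)]) hκ₀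
  have hN : κ₀ * N₁ ≤ ⌈κ₀ * N₁⌉₊ := Nat.le_ceil _
  have hN' : (⌈κ₀ * N₁⌉₊ : ℝ) < κ₀ * N₁ + 1 := Nat.ceil_lt_add_one (by positivity)
  have hκN : 1 ≤ κ₀ * N₁ := one_le_mul_of_one_le_of_one_le hκ₀1 hN₁
  set κ : ℝ := ⌈κ₀ * N₁⌉₊ / N₁ with hκ
  have hκ₀κ : κ₀ ≤ κ := by rwa [hκ, le_div_iff₀ (by positivity)]
  refine ⟨⟨ρ, κ, ⌈κ₀ * N₁⌉₊, C κ * Q, C κ * b, hρ, hκ₀.trans hκ₀κ, Nat.ceil_pos.mpr (by positivity),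
    (natDegree_C_mul_le _ _).trans hdeg, ?_, ?_, ?_⟩, rfl, hκ₀κ, ?_⟩
  · rw [coeff_C_mul, mul_assoc, htop, mul_neg, div_eq_mul_inv]
  · rw [coeff_C_mul, mul_assoc, hsub]
    field_simp
    ring
  · have hκN₁ : κ * N₁ = ⌈κ₀ * N₁⌉₊ := div_mul_cancel₀ _ (by positivity)
    rw [← hκN₁, div_eq_mul_inv κ ρ, C_mul, mul_assoc]
    exact H.smul κ
  · exact (div_le_iff₀ (by positivity)).mpr (by linarith)

variable {n : ℕ} (E : EquilibriumField n)

lemma κ_pos : 0 < E.κ := lt_of_lt_of_le (by positivity) E.le_κ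

lemma ρ_pos : 0 < E.ρ := by linarith [E.ten_le_ρ]

end EquilibriumField

end EquilibriumField

section UpperHalfPlaneSqrt

variable {z z' : ℂ}

lemma sq_csqrt (z : ℂ) : sqrt z ^ 2 = z := cpow_ofNat_inv_pow z 2

lemma csqrt_re_nonneg (z : ℂ) : 0 ≤ (sqrt z).re := by
  rw [sqrt, cpow_inv_two_re]
  positivity

lemma csqrt_im_nonneg (hz : 0 ≤ z.im) : 0 ≤ (sqrt z).im := by
  rw [sqrt, cpow_inv_two_im_eq_sqrt hz]
  positivity

lemma csqrt_ne_zero (hz : z ≠ 0) : sqrt z ≠ 0 := fun h ↦ hz (by rw [← sq_csqrt z, h, sq, zero_mul])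

lemma norm_sub_le_norm_add_of_quadrant {u v : ℂ} (hu : 0 ≤ u.re) (hu' : 0 ≤ u.im) (hv : 0 ≤ v.re)
    (hv' : 0 ≤ v.im) : ‖u - v‖ ≤ ‖u + v‖ := by
  refine le_of_sq_le_sq ?_ (norm_nonneg _)
  simp only [Complex.sq_norm, normSq_apply, sub_re, sub_im, add_re, add_im]
  nlinarith [mul_nonneg hu hv, mul_nonneg hu' hv']

lemma norm_csqrt_sub_csqrt_sq_le (hz : 0 ≤ z.im) (hz' : 0 ≤ z'.im) :
    ‖sqrt z - sqrt z'‖ ^ 2 ≤ ‖z - z'‖ := by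
  have hfactor : z - z' = (sqrt z - sqrt z') * (sqrt z + sqrt z') := by
    linear_combination sq_csqrt z' - sq_csqrt z
  rw [hfactor, norm_mul, sq]
  exact mul_le_mul_of_nonneg_left (norm_sub_le_norm_add_of_quadrant (csqrt_re_nonneg z)
    (csqrt_im_nonneg hz) (csqrt_re_nonneg z') (csqrt_im_nonneg hz')) (norm_nonneg _)

lemma continuousOn_csqrt : ContinuousOn sqrt {z | 0 ≤ z.im} := by
  intro z hz
  rw [ContinuousWithinAt, tendsto_iff_norm_sub_tendsto_zero]
  have hroot : Filter.Tendsto (fun z' : ℂ ↦ √‖z' - z‖) (nhdsWithin z {z | 0 ≤ z.im}) (nhds 0) := by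
    have : Continuous fun z' : ℂ ↦ √‖z' - z‖ := by fun_prop
    simpa using (this.tendsto z).mono_left nhdsWithin_le_nhds
  refine squeeze_zero' (.of_forall fun _ ↦ norm_nonneg _) ?_ hroot
  filter_upwards [self_mem_nhdsWithin] with z' hz'
  exact Real.le_sqrt_of_sq_le (norm_csqrt_sub_csqrt_sq_le hz' hz)

lemma hasDerivAt_csqrt (hz : z ∈ slitPlane) : HasDerivAt sqrt (2 * sqrt z)⁻¹ z := by
  refine (hasDerivAt_sqrt hz).congr_deriv ?_
  rw [neg_div, one_div, cpow_neg, mul_inv, ← sqrt]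
  ring

end UpperHalfPlaneSqrt

section JoukowskiInverse

/-- The square root of `(z - c)² - 4h²` that is analytic on the upper half plane. -/
noncomputable def cutSqrt (c h : ℝ) (z : ℂ) : ℂ :=
  sqrt (z - (c - 2 * h : ℝ)) * sqrt (z - (c + 2 * h : ℝ))

/-- The branch of the inverse of `joukowski c h` which takes values in the unit disc on the upper
half plane. -/
noncomputable def joukowskiInv (c h : ℝ) (z : ℂ) : ℂ := (z - c - cutSqrt c h z) / (2 * h)

variable {c h : ℝ} {z : ℂ}

lemma cutSqrt_sq (c h : ℝ) (z : ℂ) : cutSqrt c h z ^ 2 = (z - c) ^ 2 - 4 * h ^ 2 := by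
  rw [cutSqrt, mul_pow, sq_csqrt, sq_csqrt]
  push_cast
  ring

lemma sub_ofReal_im_nonneg (hz : 0 ≤ z.im) (x : ℝ) : 0 ≤ (z - x).im := by simpa using hz

lemma sub_ofReal_mem_slitPlane (hz : 0 < z.im) (x : ℝ) : z - x ∈ slitPlane :=
  .inr (by simpa using hz.ne')

lemma cutSqrt_ne_zero (hz : 0 < z.im) : cutSqrt c h z ≠ 0 :=
  mul_ne_zero (csqrt_ne_zero (slitPlane_ne_zero (sub_ofReal_mem_slitPlane hz _)))
    (csqrt_ne_zero (slitPlane_ne_zero (sub_ofReal_mem_slitPlane hz _)))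

lemma hasDerivAt_cutSqrt (hz : 0 < z.im) :
    HasDerivAt (cutSqrt c h) ((z - c) / cutSqrt c h z) z := by
  have hminus := sub_ofReal_mem_slitPlane hz (c - 2 * h)
  have hplus := sub_ofReal_mem_slitPlane hz (c + 2 * h)
  have hne := csqrt_ne_zero (slitPlane_ne_zero hminus)
  have hne' := csqrt_ne_zero (slitPlane_ne_zero hplus)
  refine (((hasDerivAt_csqrt hminus).comp z ((hasDerivAt_id z).sub_const _)).mul
    ((hasDerivAt_csqrt hplus).comp z ((hasDerivAt_id z).sub_const _))).congr_deriv ?_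
  have hsum : sqrt (z - (c - 2 * h : ℝ)) ^ 2 + sqrt (z - (c + 2 * h : ℝ)) ^ 2 = 2 * (z - c) := by
    rw [sq_csqrt, sq_csqrt]
    push_cast
    ring
  simp only [cutSqrt, Function.comp_apply, id]
  field_simp
  linear_combination hsum

lemma continuousOn_cutSqrt : ContinuousOn (cutSqrt c h) {z | 0 ≤ z.im} :=
  (continuousOn_csqrt.comp (by fun_prop) fun _ hz ↦ sub_ofReal_im_nonneg hz _).mul
    (continuousOn_csqrt.comp (by fun_prop) fun _ hz ↦ sub_ofReal_im_nonneg hz _)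

lemma joukowskiInv_mul_eq_one (hh : h ≠ 0) (z : ℂ) :
    joukowskiInv c h z * ((z - c + cutSqrt c h z) / (2 * h)) = 1 := by
  have hh' : (h : ℂ) ≠ 0 := ofReal_ne_zero.mpr hh
  rw [joukowskiInv]
  field_simp
  linear_combination -cutSqrt_sq c h z

lemma joukowskiInv_ne_zero (hh : h ≠ 0) (z : ℂ) : joukowskiInv c h z ≠ 0 :=
  left_ne_zero_of_mul_eq_one (joukowskiInv_mul_eq_one hh z)

lemma joukowski_joukowskiInv (hh : h ≠ 0) (z : ℂ) : joukowski c h (joukowskiInv c h z) = z := by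
  have hh' : (h : ℂ) ≠ 0 := ofReal_ne_zero.mpr hh
  rw [joukowski, inv_eq_of_mul_eq_one_right (joukowskiInv_mul_eq_one hh z), joukowskiInv]
  field_simp
  ring

/-- With `u, v` the square roots of `z - (c ∓ 2h)`, the value and its inverse are
`(u ∓ v)² / 4h`. -/
lemma norm_joukowskiInv_le_one (hh : h ≠ 0) (hz : 0 ≤ z.im) : ‖joukowskiInv c h z‖ ≤ 1 := by
  have hprod := congrArg norm (joukowskiInv_mul_eq_one (c := c) hh z)
  rw [norm_mul, norm_one] at hprod
  have hle : ‖joukowskiInv c h z‖ ≤ ‖(z - c + cutSqrt c h z) / (2 * h)‖ := by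
    have hbranch := norm_sub_le_norm_add_of_quadrant
      (csqrt_re_nonneg (z - (c - 2 * h : ℝ))) (csqrt_im_nonneg (sub_ofReal_im_nonneg hz _))
      (csqrt_re_nonneg (z - (c + 2 * h : ℝ))) (csqrt_im_nonneg (sub_ofReal_im_nonneg hz _))
    have hu := sq_csqrt (z - (c - 2 * h : ℝ))
    have hv := sq_csqrt (z - (c + 2 * h : ℝ))
    rw [joukowskiInv, cutSqrt]
    set u := sqrt (z - (c - 2 * h : ℝ))
    set v := sqrt (z - (c + 2 * h : ℝ))
    have hsum : z - c = (u ^ 2 + v ^ 2) / 2 := by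
      rw [hu, hv]
      push_cast
      ring
    rw [hsum, show (u ^ 2 + v ^ 2) / 2 - u * v = (u - v) ^ 2 / 2 by ring,
      show (u ^ 2 + v ^ 2) / 2 + u * v = (u + v) ^ 2 / 2 by ring]
    simp only [norm_div, norm_pow]
    gcongr
  nlinarith [norm_nonneg (joukowskiInv c h z)]

lemma hasDerivAt_joukowskiInv (hz : 0 < z.im) :
    HasDerivAt (joukowskiInv c h) (-joukowskiInv c h z / cutSqrt c h z) z := by
  refine ((((hasDerivAt_id z).sub_const (c : ℂ)).sub (hasDerivAt_cutSqrt hz)).div_const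
    (2 * h : ℂ)).congr_deriv ?_
  have := cutSqrt_ne_zero (c := c) (h := h) hz
  rw [joukowskiInv]
  field_simp
  ring

lemma continuousOn_joukowskiInv : ContinuousOn (joukowskiInv c h) {z | 0 ≤ z.im} :=
  ((by fun_prop : Continuous fun z : ℂ ↦ z - c).continuousOn.sub continuousOn_cutSqrt).div_const _

lemma joukowskiInv_mem_slitPlane (hh : h ≠ 0) (hz : 0 < z.im) : joukowskiInv c h z ∈ slitPlane := by
  refine .inr fun him ↦ hz.ne' ?_
  rw [← joukowski_joukowskiInv (c := c) hh z, joukowski_im, him]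
  simp

lemma exists_joukowski_eq (hh : h ≠ 0) (c : ℝ) (z : ℂ) :
    ∃ ζ : ℂ, ζ ≠ 0 ∧ ‖ζ‖ ≤ 1 ∧ joukowski c h ζ = z := by
  rcases le_total 0 z.im with hz | hz
  · exact ⟨_, joukowskiInv_ne_zero hh z, norm_joukowskiInv_le_one hh hz,
      joukowski_joukowskiInv hh z⟩
  · refine ⟨conj (joukowskiInv c h (conj z)), ?_, ?_, ?_⟩
    · simpa using joukowskiInv_ne_zero hh _
    · rw [norm_conj]
      exact norm_joukowskiInv_le_one hh (by simpa using hz)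
    · rw [joukowski_conj, joukowski_joukowskiInv hh, conj_conj]

end JoukowskiInverse

section Potential

/-- The branch of the inverse of `cutMap ρ` which takes values in the unit disc on the upper half
plane. -/
noncomputable def cutMapInv (ρ : ℝ) : ℂ → ℂ := joukowskiInv (ρ ^ 2) ((ρ ^ 2 - 1) / 2)

lemma cutMap_conj (ρ : ℝ) (ζ : ℂ) : cutMap ρ (conj ζ) = conj (cutMap ρ ζ) := joukowski_conj

namespace EquilibriumField

variable {n : ℕ} (E : EquilibriumField n) {ζ ζ' z : ℂ} {K : ℝ}

lemma halfWidth_pos : 0 < (E.ρ ^ 2 - 1) / 2 := by nlinarith [E.ten_le_ρ]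

lemma halfWidth_ne_zero : (E.ρ ^ 2 - 1) / 2 ≠ 0 := E.halfWidth_pos.ne'

/-- The effective potential, i.e. the external field plus the logarithmic potential of its
equilibrium measure, normalised to vanish on the cut and read in the coordinate `ζ` of the
disc. -/
noncomputable def potential (ζ : ℂ) : ℝ :=
  (aeval ζ⁻¹ E.b - aeval ζ E.b).re - E.N * Real.log ‖ζ‖

lemma potential_of_norm_eq_one (hζ : ‖ζ‖ = 1) : E.potential ζ = 0 := by
  rw [potential, Complex.inv_eq_conj hζ, aeval_conj, hζ]
  simp

lemma potential_conj (ζ : ℂ) : E.potential (conj ζ) = E.potential ζ := by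
  rw [potential, potential, ← map_inv₀, aeval_conj, aeval_conj]
  simp

lemma potential_eq_of_cutMap_eq (h0 : ζ ≠ 0) (h0' : ζ' ≠ 0) (h1 : ‖ζ‖ ≤ 1) (h1' : ‖ζ'‖ ≤ 1)
    (hζ : cutMap E.ρ ζ = cutMap E.ρ ζ') : E.potential ζ = E.potential ζ' := by
  rcases eq_or_mul_eq_one_of_joukowski_eq E.halfWidth_ne_zero h0 h0' hζ with rfl | hmul
  · rfl
  · have hnorm : ‖ζ‖ * ‖ζ'‖ = 1 := by rw [← norm_mul, hmul, norm_one]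
    have hone : ‖ζ‖ = 1 := by nlinarith [norm_nonneg ζ, norm_nonneg ζ']
    have hone' : ‖ζ'‖ = 1 := by nlinarith [norm_nonneg ζ, norm_nonneg ζ']
    rw [E.potential_of_norm_eq_one hone, E.potential_of_norm_eq_one hone']

/-- The analytic function on the upper half plane with real part `E.potential`. -/
noncomputable def complexPotential (z : ℂ) : ℂ :=
  aeval (cutMapInv E.ρ z)⁻¹ E.b - aeval (cutMapInv E.ρ z) E.b - E.N * log (cutMapInv E.ρ z)

lemma complexPotential_re (z : ℂ) :
    (E.complexPotential z).re = E.potential (cutMapInv E.ρ z) := by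
  simp [complexPotential, potential, log_re]

lemma cutMapInv_ne_zero (z : ℂ) : cutMapInv E.ρ z ≠ 0 :=
  joukowskiInv_ne_zero E.halfWidth_ne_zero z

lemma cutMap_cutMapInv (z : ℂ) : cutMap E.ρ (cutMapInv E.ρ z) = z :=
  joukowski_joukowskiInv E.halfWidth_ne_zero z

lemma norm_cutMapInv_le_one (hz : 0 ≤ z.im) : ‖cutMapInv E.ρ z‖ ≤ 1 :=
  norm_joukowskiInv_le_one E.halfWidth_ne_zero hz

lemma exists_cutMap_eq (z : ℂ) : ∃ ζ : ℂ, ζ ≠ 0 ∧ ‖ζ‖ ≤ 1 ∧ cutMap E.ρ ζ = z :=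
  exists_joukowski_eq E.halfWidth_ne_zero _ z

/-- The square root `√((z - 1) (z - (2ρ² - 1)))` that is analytic on the upper half plane. -/
noncomputable def sqrtFactor (z : ℂ) : ℂ := cutSqrt (E.ρ ^ 2) ((E.ρ ^ 2 - 1) / 2) z

lemma sqrtFactor_sq (z : ℂ) : E.sqrtFactor z ^ 2 = (z - 1) * (z - (2 * E.ρ ^ 2 - 1 : ℝ)) := by
  rw [sqrtFactor, cutSqrt_sq]
  push_cast
  ring

lemma norm_sqrtFactor_le (hz : ‖z‖ ≤ K) : ‖E.sqrtFactor z‖ ≤ E.ρ * (K + 2) := by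
  have hK : 0 ≤ K := (norm_nonneg z).trans hz
  have hρ := E.ten_le_ρ
  have hsq := congrArg norm (E.sqrtFactor_sq z)
  rw [norm_pow, norm_mul] at hsq
  have hleft : ‖z - 1‖ ≤ K + 1 := (norm_sub_le _ _).trans (by simpa using hz)
  have hright : ‖z - (2 * E.ρ ^ 2 - 1 : ℝ)‖ ≤ K + 2 * E.ρ ^ 2 := by
    refine (norm_sub_le _ _).trans ?_
    rw [norm_real, Real.norm_of_nonneg (by nlinarith)]
    linarith
  refine le_of_sq_le_sq ?_ (by positivity)
  calc ‖E.sqrtFactor z‖ ^ 2 ≤ (K + 1) * (K + 2 * E.ρ ^ 2) := hsq.trans_le (by gcongr)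
    _ ≤ (E.ρ * (K + 2)) ^ 2 := by
      have hρ1 : 0 ≤ E.ρ ^ 2 - 1 := by nlinarith
      nlinarith [mul_nonneg hK hK, mul_nonneg (mul_nonneg hK hK) hρ1, mul_nonneg hK hρ1]

lemma hasDerivAt_complexPotential (hz : 0 < z.im) : HasDerivAt E.complexPotential
    (-(E.κ / E.ρ : ℝ) * z ^ n * E.sqrtFactor z) z := by
  have hne := E.cutMapInv_ne_zero z
  have hinv : HasDerivAt (cutMapInv E.ρ) (-cutMapInv E.ρ z / E.sqrtFactor z) z :=
    hasDerivAt_joukowskiInv hz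
  refine ((((Polynomial.hasDerivAt_aeval E.b _).comp z (hinv.inv hne)).sub
    ((Polynomial.hasDerivAt_aeval E.b _).comp z hinv)).sub ((hinv.clog
      (joukowskiInv_mem_slitPlane E.halfWidth_ne_zero hz)).const_mul (E.N : ℂ))).congr_deriv ?_
  have hfactor : E.sqrtFactor z ≠ 0 := cutSqrt_ne_zero hz
  have hderiv := E.isEquilibriumPair.deriv _ hne
  rw [← cutMap, E.cutMap_cutMapInv, map_mul, aeval_densityPoly, aeval_C, coe_algebraMap,
    ← E.sqrtFactor_sq] at hderiv
  simp only [Pi.inv_apply]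
  field_simp at hderiv ⊢
  push_cast at hderiv ⊢
  linear_combination hderiv

lemma norm_complexPotential_sub_le (hz : 0 < z.im) (hzK : ‖z‖ ≤ K) {z' : ℂ} (hz' : 0 < z'.im)
    (hzK' : ‖z'‖ ≤ K) : ‖E.complexPotential z - E.complexPotential z'‖ ≤
      E.κ * (K + 2) ^ (n + 1) * ‖z - z'‖ := by
  have hκ := E.κ_pos
  have hρ := E.ρ_pos
  have hK : 0 ≤ K := (norm_nonneg z).trans hzK
  refine ((convex_halfSpace_im_gt 0).inter
    (convex_closedBall (0 : ℂ) K)).norm_image_sub_le_of_norm_hasDerivWithin_le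
    (fun x hx ↦ (E.hasDerivAt_complexPotential hx.1).hasDerivWithinAt) (fun x hx ↦ ?_)
    ⟨hz', by simpa using hzK'⟩ ⟨hz, by simpa using hzK⟩
  have hxK : ‖x‖ ≤ K := by simpa using hx.2
  rw [norm_mul, norm_mul, norm_neg, norm_real, norm_pow, Real.norm_of_nonneg (by positivity)]
  calc E.κ / E.ρ * ‖x‖ ^ n * ‖E.sqrtFactor x‖
      ≤ E.κ / E.ρ * (K + 2) ^ n * (E.ρ * (K + 2)) := by
        gcongr
        · linarith
        · exact E.norm_sqrtFactor_le hxK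
    _ = E.κ * (K + 2) ^ (n + 1) := by
        field_simp
        ring

lemma continuousOn_potential_cutMapInv :
    ContinuousOn (fun z ↦ E.potential (cutMapInv E.ρ z)) {z | 0 ≤ z.im} := by
  have hinv : ContinuousOn (cutMapInv E.ρ) {z | 0 ≤ z.im} := continuousOn_joukowskiInv
  have hb := (Polynomial.differentiable_aeval (𝕜 := ℂ) E.b).continuous
  refine .sub (continuous_re.comp_continuousOn (.sub ?_ (hb.comp_continuousOn hinv)))
    (continuousOn_const.mul (hinv.norm.log fun z _ ↦ norm_ne_zero_iff.mpr (E.cutMapInv_ne_zero z)))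
  exact hb.comp_continuousOn (hinv.inv₀ fun z _ ↦ E.cutMapInv_ne_zero z)

lemma lipschitzOnWith_potential_cutMapInv (hK : 0 < K) :
    LipschitzOnWith (E.κ * (K + 2) ^ (n + 1)).toNNReal (fun z ↦ E.potential (cutMapInv E.ρ z))
      ({z | 0 ≤ z.im} ∩ Metric.closedBall 0 K) := by
  have hκ := E.κ_pos
  have hinterior : interior ({z : ℂ | 0 ≤ z.im} ∩ Metric.closedBall 0 K) =
      {z | 0 < z.im} ∩ Metric.ball 0 K := by
    rw [interior_inter, interior_setOfPred_le_im, interior_closedBall _ hK.ne']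
  have hclosed : IsClosed ({z : ℂ | 0 ≤ z.im} ∩ Metric.closedBall 0 K) :=
    (isClosed_le continuous_const continuous_im).inter Metric.isClosed_closedBall
  have hclosure : closure ({z : ℂ | 0 < z.im} ∩ Metric.ball 0 K) =
      {z | 0 ≤ z.im} ∩ Metric.closedBall 0 K := by
    rw [← hinterior, ((convex_halfSpace_im_ge 0).inter
      (convex_closedBall _ K)).closure_interior_eq_closure_of_nonempty_interior, hclosed.closure_eq]
    rw [hinterior]
    exact ⟨(K / 2 : ℝ) * I, by simpa using hK, by simp [abs_of_pos hK, hK]⟩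
  rw [← hclosure]
  refine LipschitzOnWith.closure ?_ (LipschitzOnWith.of_dist_le_mul fun z hz z' hz' ↦ ?_)
  · rw [hclosure]
    exact E.continuousOn_potential_cutMapInv.mono Set.inter_subset_left
  · rw [Real.dist_eq, ← complexPotential_re, ← complexPotential_re, ← sub_re, dist_eq_norm,
      Real.coe_toNNReal _ (by positivity)]
    exact (abs_re_le_norm _).trans (E.norm_complexPotential_sub_le hz.1
      (mem_ball_zero_iff.mp hz.2).le hz'.1 (mem_ball_zero_iff.mp hz'.2).le)

lemma abs_potential_sub_le (h0 : ζ ≠ 0) (h0' : ζ' ≠ 0) (h1 : ‖ζ‖ ≤ 1) (h1' : ‖ζ'‖ ≤ 1)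
    (hK : 0 < K) (hζ : ‖cutMap E.ρ ζ‖ ≤ K) {x : ℝ} (hζ' : cutMap E.ρ ζ' = x) (hx : |x| ≤ K) :
    |E.potential ζ - E.potential ζ'| ≤ E.κ * (K + 2) ^ (n + 1) * ‖cutMap E.ρ ζ - x‖ := by
  wlog him : 0 ≤ (cutMap E.ρ ζ).im generalizing ζ
  · have hconj := this (ζ := conj ζ) (by simpa using h0) (by rwa [norm_conj])
      (by rwa [cutMap_conj, norm_conj]) (by rw [cutMap_conj, conj_im]; linarith)
    rwa [potential_conj, cutMap_conj, ← conj_ofReal x, ← map_sub, norm_conj] at hconj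
  have hκ := E.κ_pos
  rw [E.potential_eq_of_cutMap_eq h0 (E.cutMapInv_ne_zero _) h1 (E.norm_cutMapInv_le_one him)
      (E.cutMap_cutMapInv _).symm,
    E.potential_eq_of_cutMap_eq h0' (E.cutMapInv_ne_zero x) h1' (E.norm_cutMapInv_le_one (by simp))
      (by rw [E.cutMap_cutMapInv, hζ'])]
  have := (E.lipschitzOnWith_potential_cutMapInv hK).dist_le_mul (cutMap E.ρ ζ)
    ⟨him, by simpa using hζ⟩ x ⟨by simp, by simpa using hx⟩
  rwa [Real.dist_eq, dist_eq_norm, Real.coe_toNNReal _ (by positivity)] at this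

end EquilibriumField

end Potential

section RealAxis

variable {ρ σ t : ℝ}

/-- The restriction of `cutMap ρ` to the real axis. -/
noncomputable def realCutMap (ρ σ : ℝ) : ℝ := ρ ^ 2 + (ρ ^ 2 - 1) / 2 * (σ + σ⁻¹)

lemma cutMap_ofReal (ρ σ : ℝ) : cutMap ρ σ = realCutMap ρ σ := by
  rw [cutMap, joukowski, realCutMap]
  push_cast
  rfl

lemma realCutMap_neg_one (ρ : ℝ) : realCutMap ρ (-1) = 1 := by
  rw [realCutMap]
  norm_num

lemma hasDerivAt_realCutMap (ρ : ℝ) (hσ : σ ≠ 0) :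
    HasDerivAt (realCutMap ρ) ((ρ ^ 2 - 1) / 2 * (1 - (σ ^ 2)⁻¹)) σ :=
  ((((hasDerivAt_id σ).add (hasDerivAt_inv hσ)).const_mul _).const_add _).congr_deriv (by ring)

lemma realCutMap_pos (hρ : 1 ≤ ρ ^ 2) (hσ : 0 < σ) : 0 < realCutMap ρ σ := by
  have : 0 ≤ ρ ^ 2 - 1 := by linarith
  rw [realCutMap]
  positivity

lemma antitoneOn_realCutMap (hρ : 1 ≤ ρ ^ 2) : AntitoneOn (realCutMap ρ) (Set.Ico (-1) 0) := by
  rintro σ ⟨hσ, hσ0⟩ τ ⟨hτ, hτ0⟩ hστ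
  have hsum : σ + σ⁻¹ - (τ + τ⁻¹) = (τ - σ) * (1 - σ * τ) / (σ * τ) := by
    have := hσ0.ne
    have := hτ0.ne
    field_simp
    ring
  have hprod : 0 < σ * τ := mul_pos_of_neg_of_neg hσ0 hτ0
  have : 0 ≤ (τ - σ) * (1 - σ * τ) / (σ * τ) :=
    div_nonneg (mul_nonneg (by linarith) (by nlinarith)) hprod.le
  have hle : τ + τ⁻¹ ≤ σ + σ⁻¹ := by linarith
  rw [realCutMap, realCutMap]
  gcongr

lemma mul_one_add_le_of_realCutMap_nonneg (hσ : σ < 0) (ht : 0 ≤ realCutMap ρ σ) :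
    ρ * (1 + σ) ≤ 1 - σ := by
  have hquad : ρ ^ 2 * (1 + σ) ^ 2 - (1 + σ ^ 2) = 2 * (σ * realCutMap ρ σ) := by
    have := hσ.ne
    rw [realCutMap]
    field_simp
    ring
  refine le_of_sq_le_sq ?_ (by linarith)
  nlinarith [mul_nonpos_of_nonpos_of_nonneg hσ.le ht]

/-- A primitive of `t ^ n (1 - t)`. -/
noncomputable def betaPrimitive (n : ℕ) (t : ℝ) : ℝ := t ^ (n + 1) / (n + 1) - t ^ (n + 2) / (n + 2)

lemma hasDerivAt_betaPrimitive (n : ℕ) (t : ℝ) :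
    HasDerivAt (betaPrimitive n) (t ^ n * (1 - t)) t := by
  refine (((hasDerivAt_pow (n + 1) t).div_const (n + 1 : ℝ)).sub
    ((hasDerivAt_pow (n + 2) t).div_const (n + 2 : ℝ))).congr_deriv ?_
  have : (n : ℝ) + 1 ≠ 0 := by positivity
  have : (n : ℝ) + 2 ≠ 0 := by positivity
  simp only [Nat.add_sub_cancel, show n + 2 - 1 = n + 1 from rfl]
  push_cast
  field_simp
  ring

lemma betaPrimitive_one_sub_zero (n : ℕ) :
    betaPrimitive n 1 - betaPrimitive n 0 = 1 / ((n + 1) * (n + 2)) := by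
  have : (n : ℝ) + 1 ≠ 0 := by positivity
  have : (n : ℝ) + 2 ≠ 0 := by positivity
  simp only [betaPrimitive, one_pow, zero_pow (Nat.succ_ne_zero _)]
  field_simp
  ring

lemma monotoneOn_betaPrimitive (n : ℕ) : MonotoneOn (betaPrimitive n) (Set.Icc 0 1) := by
  refine monotoneOn_of_hasDerivWithinAt_nonneg (convex_Icc 0 1)
    (fun t _ ↦ (hasDerivAt_betaPrimitive n t).continuousAt.continuousWithinAt)
    (fun t _ ↦ (hasDerivAt_betaPrimitive n t).hasDerivWithinAt) fun t ht ↦ ?_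
  obtain ⟨h0, h1⟩ := interior_subset ht
  exact mul_nonneg (pow_nonneg h0 n) (sub_nonneg.mpr h1)

namespace EquilibriumField

variable {n : ℕ} (E : EquilibriumField n) {ζ : ℂ}

lemma one_le_ρ_sq : 1 ≤ E.ρ ^ 2 := by nlinarith [E.ten_le_ρ]

lemma aeval_ofReal (b : ℝ[X]) (σ : ℝ) : aeval (σ : ℂ) b = (b.eval σ : ℝ) := by
  simpa using aeval_algebraMap_apply_eq_algebraMap_eval (A := ℂ) σ b

lemma potential_ofReal (σ : ℝ) :
    E.potential σ = E.b.eval σ⁻¹ - E.b.eval σ - E.N * Real.log σ := by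
  rw [potential, ← ofReal_inv, aeval_ofReal, aeval_ofReal, norm_real, Real.norm_eq_abs,
    Real.log_abs, ← ofReal_sub, ofReal_re]

lemma hasDerivAt_potential_ofReal (hσ : σ ≠ 0) : HasDerivAt (fun σ : ℝ ↦ E.potential σ)
    (E.κ / E.ρ * realCutMap E.ρ σ ^ n * (((E.ρ ^ 2 - 1) / 2) ^ 2 * (σ - σ⁻¹) ^ 2) / σ) σ := by
  have hderiv : E.κ / E.ρ * realCutMap E.ρ σ ^ n * (((E.ρ ^ 2 - 1) / 2) ^ 2 * (σ - σ⁻¹) ^ 2) =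
      -E.N - σ * (derivative E.b).eval σ - σ⁻¹ * (derivative E.b).eval σ⁻¹ := by
    have := E.isEquilibriumPair.deriv σ (ofReal_ne_zero.mpr hσ)
    rw [← cutMap, cutMap_ofReal, ← ofReal_inv, aeval_ofReal, aeval_ofReal, aeval_ofReal] at this
    norm_cast at this
    push_cast at this
    rw [← this, densityPoly]
    simp only [eval_mul, eval_C, eval_pow, eval_X, eval_sub, eval_one, mul_assoc]
    congr 2
    rw [realCutMap]
    field_simp
    ring
  simp only [potential_ofReal]
  refine ((((E.b.hasDerivAt σ⁻¹).comp σ (hasDerivAt_inv hσ)).sub (E.b.hasDerivAt σ)).sub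
    ((Real.hasDerivAt_log hσ).const_mul (E.N : ℝ))).congr_deriv ?_
  rw [hderiv]
  field_simp
  ring

lemma potential_ofReal_nonpos_of_pos (hσ : 0 < σ) (hσ1 : σ ≤ 1) : E.potential σ ≤ 0 := by
  have hκ := E.κ_pos
  have hρ := E.ρ_pos
  have hpos : ∀ τ ∈ Set.Icc σ 1, 0 < τ := fun τ hτ ↦ hσ.trans_le hτ.1
  have hmono : MonotoneOn (fun σ : ℝ ↦ E.potential σ) (Set.Icc σ 1) := by
    refine monotoneOn_of_hasDerivWithinAt_nonneg (convex_Icc _ _)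
      (fun τ hτ ↦ (E.hasDerivAt_potential_ofReal
        (hpos τ hτ).ne').continuousAt.continuousWithinAt)
      (fun τ hτ ↦ (E.hasDerivAt_potential_ofReal
        (hpos τ (interior_subset hτ)).ne').hasDerivWithinAt) fun τ hτ ↦ ?_
    have hτ0 := hpos τ (interior_subset hτ)
    have := realCutMap_pos E.one_le_ρ_sq hτ0
    positivity
  have := hmono (Set.left_mem_Icc.mpr hσ1) (Set.right_mem_Icc.mpr hσ1) hσ1
  simpa [E.potential_of_norm_eq_one] using this

lemma deriv_potential_add_betaPrimitive_nonpos (hσ : -1 < σ) (hσ0 : σ < 0)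
    (ht : 0 ≤ realCutMap E.ρ σ) :
    E.κ / E.ρ * realCutMap E.ρ σ ^ n * (((E.ρ ^ 2 - 1) / 2) ^ 2 * (σ - σ⁻¹) ^ 2) / σ -
      E.κ * (realCutMap E.ρ σ ^ n * (1 - realCutMap E.ρ σ) *
        ((E.ρ ^ 2 - 1) / 2 * (1 - (σ ^ 2)⁻¹))) ≤ 0 := by
  have hκ := E.κ_pos
  have hρ := E.ρ_pos
  have hone_sub : 1 - realCutMap E.ρ σ = (E.ρ ^ 2 - 1) / 2 * ((1 + σ) ^ 2 / (-σ)) := by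
    have := hσ0.ne
    rw [realCutMap]
    field_simp
    ring
  have hfactor : E.κ / E.ρ * realCutMap E.ρ σ ^ n *
        (((E.ρ ^ 2 - 1) / 2) ^ 2 * (σ - σ⁻¹) ^ 2) / σ -
      E.κ * (realCutMap E.ρ σ ^ n * (1 - realCutMap E.ρ σ) *
        ((E.ρ ^ 2 - 1) / 2 * (1 - (σ ^ 2)⁻¹))) =
      -(E.κ / E.ρ * realCutMap E.ρ σ ^ n * ((E.ρ ^ 2 - 1) / 2) ^ 2 * (1 + σ) ^ 2 * (1 - σ) /
        (-σ) ^ 3 * (1 - σ - E.ρ * (1 + σ))) := by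
    have := hσ0.ne
    rw [hone_sub]
    generalize realCutMap E.ρ σ ^ n = T
    field_simp
    ring
  have hnonneg := sub_nonneg.mpr (mul_one_add_le_of_realCutMap_nonneg hσ0 ht)
  have hneg : 0 < -σ := neg_pos.mpr hσ0
  have hsub : 0 < 1 - σ := by linarith
  rw [hfactor, neg_nonpos]
  positivity

lemma potential_ofReal_le_of_neg (hσ : -1 ≤ σ) (hσ0 : σ < 0) (ht : 0 ≤ realCutMap E.ρ σ) :
    E.potential σ ≤ -(E.κ * (betaPrimitive n 1 - betaPrimitive n (realCutMap E.ρ σ))) := by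
  have hneg : ∀ τ ∈ Set.Icc (-1) σ, τ < 0 := fun τ hτ ↦ hτ.2.trans_lt hσ0
  have hderiv (τ : ℝ) (hτ : τ ∈ Set.Icc (-1) σ) :=
    (E.hasDerivAt_potential_ofReal (hneg τ hτ).ne).sub
      (((hasDerivAt_betaPrimitive n (realCutMap E.ρ τ)).comp τ
        (hasDerivAt_realCutMap E.ρ (hneg τ hτ).ne)).const_mul E.κ)
  have hanti := antitoneOn_of_hasDerivWithinAt_nonpos (convex_Icc (-1) σ)
    (fun τ hτ ↦ (hderiv τ hτ).continuousAt.continuousWithinAt)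
    (fun τ hτ ↦ (hderiv τ (interior_subset hτ)).hasDerivWithinAt) fun τ hτ ↦ ?_
  · have hle := hanti (Set.left_mem_Icc.mpr hσ) (Set.right_mem_Icc.mpr hσ) hσ
    have hzero : E.potential (-1 : ℝ) = 0 := E.potential_of_norm_eq_one (by simp)
    simp only [Pi.sub_apply, Function.comp_apply, realCutMap_neg_one, hzero] at hle
    linarith
  · rw [interior_Icc] at hτ
    have hτ0 := hτ.2.trans hσ0
    exact E.deriv_potential_add_betaPrimitive_nonpos hτ.1 hτ0 (ht.trans
      (antitoneOn_realCutMap E.one_le_ρ_sq ⟨hτ.1.le, hτ0⟩ ⟨hσ, hσ0⟩ hτ.2.le))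

lemma norm_eq_one_or_eq_ofReal (hζ : (cutMap E.ρ ζ).im = 0) : ‖ζ‖ = 1 ∨ ∃ σ : ℝ, ζ = σ :=
  (im_eq_zero_or_norm_eq_one_of_joukowski_im_eq_zero E.halfWidth_ne_zero hζ).symm.imp_right
    fun him ↦ ⟨ζ.re, Complex.ext rfl him⟩

lemma potential_nonpos (h0 : ζ ≠ 0) (h1 : ‖ζ‖ ≤ 1) (ht : 0 ≤ t) (hζ : cutMap E.ρ ζ = t) :
    E.potential ζ ≤ 0 := by
  rcases E.norm_eq_one_or_eq_ofReal (ζ := ζ) (by simp [hζ]) with hone | ⟨σ, rfl⟩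
  · exact (E.potential_of_norm_eq_one hone).le
  rw [norm_real, Real.norm_eq_abs, abs_le] at h1
  rw [cutMap_ofReal, ofReal_inj] at hζ
  rcases lt_or_gt_of_ne (ofReal_ne_zero.mp h0) with hσ | hσ
  · have hle := antitoneOn_realCutMap E.one_le_ρ_sq ⟨le_rfl, by norm_num⟩ ⟨h1.1, hσ⟩ h1.1
    rw [realCutMap_neg_one, hζ] at hle
    have hβ := monotoneOn_betaPrimitive n ⟨ht, hle⟩ ⟨zero_le_one, le_rfl⟩ hle
    have hpot := E.potential_ofReal_le_of_neg h1.1 hσ (hζ ▸ ht)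
    rw [hζ] at hpot
    exact hpot.trans (neg_nonpos.mpr (mul_nonneg E.κ_pos.le (sub_nonneg.mpr hβ)))
  · exact E.potential_ofReal_nonpos_of_pos hσ h1.2

lemma potential_le_of_cutMap_eq_zero (h0 : ζ ≠ 0) (h1 : ‖ζ‖ ≤ 1) (hζ : cutMap E.ρ ζ = 0) :
    E.potential ζ ≤ -(E.κ / ((n + 1) * (n + 2))) := by
  rcases E.norm_eq_one_or_eq_ofReal (ζ := ζ) (by simp [hζ]) with hone | ⟨σ, rfl⟩
  · rw [cutMap_of_norm_eq_one _ hone, ofReal_eq_zero] at hζ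
    linarith [one_le_cutMap_re E.one_le_ρ_sq hone]
  rw [norm_real, Real.norm_eq_abs, abs_le] at h1
  rw [cutMap_ofReal, ofReal_eq_zero] at hζ
  have hσ : σ < 0 := (lt_or_gt_of_ne (ofReal_ne_zero.mp h0)).resolve_right fun hσ ↦
    (realCutMap_pos E.one_le_ρ_sq hσ).ne' hζ
  have := E.potential_ofReal_le_of_neg h1.1 hσ hζ.ge
  rwa [hζ, betaPrimitive_one_sub_zero, mul_one_div] at this

end EquilibriumField

end RealAxis

section WeightedDiscriminant

open Filter Finset Topology

variable {ι : Type*}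

/-- The function `exp Q ∏ (z - x k)`, the product running over `k ∈ s`. -/
noncomputable def weightedNodal (Q : ℝ[X]) (s : Finset ι) (x : ι → ℝ) (z : ℂ) : ℂ :=
  exp (aeval z Q) * aeval z (Lagrange.nodal s x)

variable (Q : ℝ[X]) (s : Finset ι) (x : ι → ℝ) {k : ι}

lemma weightedNodal_eq_prod (z : ℂ) :
    weightedNodal Q s x z = exp (aeval z Q) * ∏ k ∈ s, (z - x k) := by
  simp [weightedNodal, Lagrange.nodal, map_prod]

lemma weightedNodal_ofReal (t : ℝ) :
    weightedNodal Q s x t = (Real.exp (Q.eval t) * (Lagrange.nodal s x).eval t : ℝ) := by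
  rw [weightedNodal, EquilibriumField.aeval_ofReal, EquilibriumField.aeval_ofReal]
  push_cast
  rfl

lemma differentiable_weightedNodal : Differentiable ℂ (weightedNodal Q s x) :=
  Q.differentiable_aeval.cexp.mul (Polynomial.differentiable_aeval _)

variable [DecidableEq ι]

lemma weightedNodal_eq_sub_mul (hk : k ∈ s) (z : ℂ) :
    weightedNodal Q s x z = (z - x k) * weightedNodal Q (s.erase k) x z := by
  simp only [weightedNodal_eq_prod, ← mul_prod_erase s _ hk]
  ring

lemma prod_prod_erase_eq_sq_mul {R : Type*} [CommRing R] {s : Finset ι} {k : ι} (hk : k ∈ s)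
    {a : ι → ι → R} (ha : ∀ i j, a i j = a j i) :
    ∏ i ∈ s, ∏ j ∈ s.erase i, a i j = (∏ j ∈ s.erase k, a k j) ^ 2 *
      ∏ i ∈ s.erase k, ∏ j ∈ (s.erase k).erase i, a i j := by
  have hrow : ∀ i ∈ s.erase k,
      ∏ j ∈ s.erase i, a i j = a k i * ∏ j ∈ (s.erase k).erase i, a i j := fun i hi ↦ by
    rw [erase_right_comm, ha k i,
      mul_prod_erase _ _ (mem_erase.mpr ⟨(ne_of_mem_erase hi).symm, hk⟩)]
  rw [← mul_prod_erase s _ hk, prod_congr rfl hrow, prod_mul_distrib]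
  ring

/-- The discriminant of the points `x i`, each pair being counted twice, weighted by `exp Q`. -/
noncomputable def weightedDiscriminant {ι : Type*} [DecidableEq ι] (Q : ℝ[X]) (s : Finset ι)
    (x : ι → ℝ) : ℝ :=
  (∏ i ∈ s, ∏ j ∈ s.erase i, |x i - x j|) * ∏ i ∈ s, Real.exp (Q.eval (x i)) ^ 2

lemma continuous_weightedDiscriminant : Continuous (weightedDiscriminant Q s) := by
  unfold weightedDiscriminant
  have := Q.continuous
  fun_prop

variable {s x} in
lemma weightedDiscriminant_pos (hx : Set.InjOn x s) : 0 < weightedDiscriminant Q s x := by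
  refine mul_pos (prod_pos fun i hi ↦ prod_pos fun j hj ↦ ?_) (prod_pos fun i _ ↦ by positivity)
  have ⟨hji, hj⟩ := mem_erase.mp hj
  exact abs_pos.mpr (sub_ne_zero.mpr fun hij ↦ hji (hx hi hj hij).symm)

variable {s x} in
lemma injOn_of_weightedDiscriminant_pos (h : 0 < weightedDiscriminant Q s x) : Set.InjOn x s := by
  intro i hi j hj hij
  by_contra hne
  have hprod := left_ne_zero_of_mul h.ne'
  exact prod_ne_zero_iff.mp (prod_ne_zero_iff.mp hprod i hi) j
    (mem_erase.mpr ⟨Ne.symm hne, hj⟩) (by rw [hij, sub_self, abs_zero])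

lemma weightedDiscriminant_update (hk : k ∈ s) (t : ℝ) :
    weightedDiscriminant Q s (Function.update x k t) =
      ‖weightedNodal Q (s.erase k) x t‖ ^ 2 * weightedDiscriminant Q (s.erase k) x := by
  have hrest : ∀ i ∈ s.erase k, Function.update x k t i = x i := fun i hi ↦
    Function.update_of_ne (ne_of_mem_erase hi) _ _
  have hpairs : ∏ i ∈ s.erase k, ∏ j ∈ (s.erase k).erase i,
      |Function.update x k t i - Function.update x k t j| =
        ∏ i ∈ s.erase k, ∏ j ∈ (s.erase k).erase i, |x i - x j| :=
    prod_congr rfl fun i hi ↦ prod_congr rfl fun j hj ↦ by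
      rw [hrest i hi, hrest j (mem_of_mem_erase hj)]
  have hrow : ∏ j ∈ s.erase k, |Function.update x k t k - Function.update x k t j| =
      ∏ j ∈ s.erase k, |t - x j| :=
    prod_congr rfl fun j hj ↦ by rw [hrest j hj, Function.update_self]
  have hexp : ∏ i ∈ s.erase k, Real.exp (Q.eval (Function.update x k t i)) ^ 2 =
      ∏ i ∈ s.erase k, Real.exp (Q.eval (x i)) ^ 2 :=
    prod_congr rfl fun i hi ↦ by rw [hrest i hi]
  rw [weightedDiscriminant, prod_prod_erase_eq_sq_mul hk fun i j ↦ abs_sub_comm _ _,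
    ← mul_prod_erase s (fun i ↦ Real.exp _ ^ 2) hk, hpairs, hrow, hexp, Function.update_self,
    weightedNodal_ofReal, norm_real, Real.norm_eq_abs, abs_mul, Real.abs_exp, Lagrange.eval_nodal,
    abs_prod, weightedDiscriminant]
  ring

lemma abs_sub_le_one_add_mul_one_add {a b : ℝ} (ha : 0 ≤ a) (hb : 0 ≤ b) :
    |a - b| ≤ (1 + a) * (1 + b) := by
  have := mul_nonneg ha hb
  rw [abs_le]
  constructor <;> linarith

variable {s x} in
lemma weightedDiscriminant_le (hx : ∀ i ∈ s, 0 ≤ x i) :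
    weightedDiscriminant Q s x ≤ ∏ i ∈ s, (1 + x i) ^ (2 * #s) * Real.exp (Q.eval (x i)) ^ 2 := by
  rw [prod_mul_distrib]
  refine mul_le_mul_of_nonneg_right ?_ (prod_nonneg fun i _ ↦ by positivity)
  calc ∏ i ∈ s, ∏ j ∈ s.erase i, |x i - x j|
      ≤ ∏ i ∈ s, ∏ j ∈ s, (1 + x i) * (1 + x j) := by
        refine prod_le_prod (fun i _ ↦ prod_nonneg fun j _ ↦ abs_nonneg _) fun i hi ↦ ?_
        have hnonneg : 0 ≤ ∏ j ∈ s.erase i, (1 + x i) * (1 + x j) := prod_nonneg fun j hj ↦ by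
          have := hx i hi
          have := hx j (mem_of_mem_erase hj)
          positivity
        calc ∏ j ∈ s.erase i, |x i - x j| ≤ ∏ j ∈ s.erase i, (1 + x i) * (1 + x j) :=
              prod_le_prod (fun j _ ↦ abs_nonneg _) fun j hj ↦
                abs_sub_le_one_add_mul_one_add (hx i hi) (hx j (mem_of_mem_erase hj))
          _ ≤ ∏ j ∈ s, (1 + x i) * (1 + x j) := by
            rw [← mul_prod_erase s _ hi]
            exact le_mul_of_one_le_left hnonneg (by nlinarith [hx i hi])
    _ = ∏ i ∈ s, (1 + x i) ^ (2 * #s) := by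
      simp only [prod_mul_distrib, prod_const, prod_pow]
      ring

lemma tendsto_one_add_pow_mul_exp_eval {Q : ℝ[X]} (m : ℕ) (hQ : 1 < Q.degree)
    (hQ' : Q.leadingCoeff < 0) :
    Tendsto (fun t ↦ (1 + t) ^ m * Real.exp (Q.eval t)) atTop (𝓝 0) := by
  have hX : (X : ℝ[X]).degree < Q.degree := by rwa [degree_X]
  have hQX : Tendsto (fun t ↦ (Q + X).eval t) atTop atBot := by
    apply Polynomial.tendsto_atBot_of_leadingCoeff_nonpos
    · rw [degree_add_eq_left_of_degree_lt hX]
      exact zero_lt_one.trans hQ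
    · rw [leadingCoeff_add_of_degree_lt' hX]
      exact hQ'.le
  have hdom : Tendsto (fun t : ℝ ↦ Real.exp 1 * ((1 + t) ^ m * Real.exp (-(1 + t))))
      atTop (𝓝 0) := by
    simpa using ((Real.tendsto_pow_mul_exp_neg_atTop_nhds_zero m).comp
      (tendsto_atTop_add_const_left _ (1 : ℝ) tendsto_id)).const_mul (Real.exp 1)
  refine squeeze_zero' ?_ ?_ hdom
  · filter_upwards [eventually_ge_atTop 0] with t ht
    positivity
  · filter_upwards [eventually_ge_atTop 0, hQX.eventually (eventually_le_atBot 0)] with t ht h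
    rw [eval_add, eval_X] at h
    rw [mul_left_comm, ← Real.exp_add]
    gcongr
    linarith

lemma exists_forall_le_of_tendsto_atTop {g : ℝ → ℝ} (hg : Continuous g) {l : ℝ}
    (hlim : Tendsto g atTop (𝓝 l)) (a : ℝ) : ∃ B, ∀ t, a ≤ t → g t ≤ B := by
  obtain ⟨T, hT⟩ := (hlim.eventually_le_const (lt_add_one l)).exists_forall_of_atTop
  obtain ⟨B, hB⟩ := (isCompact_Icc (a := a) (b := T)).bddAbove_image hg.continuousOn
  refine ⟨max (l + 1) B, fun t ht ↦ ?_⟩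
  rcases le_total t T with h | h
  · exact (hB ⟨t, ⟨ht, h⟩, rfl⟩).trans (le_max_right _ _)
  · exact (hT t h).trans (le_max_left _ _)

lemma eventually_cocompact_prod_le {ι : Type*} [Fintype ι] {g : ℝ → ℝ} (hg : Continuous g)
    (hnonneg : ∀ t, 0 ≤ t → 0 ≤ g t) (hlim : Tendsto g atTop (𝓝 0)) {ε : ℝ} (hε : 0 < ε) :
    ∀ᶠ y in cocompact (ι → ℝ) ⊓ 𝓟 (Set.Ici 0), ∏ i, g (y i) ≤ ε := by
  classical
  obtain ⟨B₀, hB₀⟩ := exists_forall_le_of_tendsto_atTop hg hlim 0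
  set B := max 1 B₀
  have hB : ∀ t, 0 ≤ t → g t ≤ B := fun t ht ↦ (hB₀ t ht).trans (le_max_right _ _)
  have hB1 : 1 ≤ B := le_max_left _ _
  obtain ⟨T, hT⟩ := (hlim.eventually_le_const
    (show 0 < ε / B ^ Fintype.card ι by positivity)).exists_forall_of_atTop
  refine eventually_inf_principal.mpr ?_
  filter_upwards [(isCompact_univ_pi fun _ : ι ↦
    isCompact_Icc (a := (0 : ℝ)) (b := T)).compl_mem_cocompact] with y hy hy0
  obtain ⟨i, hi⟩ : ∃ i, T < y i := by
    by_contra! h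
    exact hy fun i _ ↦ ⟨hy0 i, h i⟩
  rw [← mul_prod_erase univ _ (mem_univ i)]
  calc g (y i) * ∏ j ∈ univ.erase i, g (y j)
      ≤ ε / B ^ Fintype.card ι * B ^ Fintype.card ι := by
        gcongr
        · exact prod_nonneg fun j _ ↦ hnonneg _ (hy0 j)
        · exact hT _ hi.le
        · refine (prod_le_prod (fun j _ ↦ hnonneg _ (hy0 j)) fun j _ ↦ hB _ (hy0 j)).trans ?_
          rw [prod_const]
          exact pow_le_pow_right₀ hB1 (card_le_univ _)
    _ = ε := by field_simp

lemma exists_isMaxOn_weightedDiscriminant [Fintype ι] {Q : ℝ[X]} (hQ : 1 < Q.degree)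
    (hQ' : Q.leadingCoeff < 0) :
    ∃ x : ι → ℝ, 0 ≤ x ∧ 0 < weightedDiscriminant Q univ x ∧
      IsMaxOn (weightedDiscriminant Q univ) (Set.Ici 0) x := by
  obtain ⟨x₀, hx₀, hinj⟩ : ∃ x₀ : ι → ℝ, 0 ≤ x₀ ∧ Function.Injective x₀ :=
    ⟨fun i ↦ (Fintype.equivFin ι i : ℕ), fun i ↦ Nat.cast_nonneg _,
      Nat.cast_injective.comp (Fin.val_injective.comp (Fintype.equivFin ι).injective)⟩
  have hpos : 0 < weightedDiscriminant Q univ x₀ := weightedDiscriminant_pos Q hinj.injOn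
  have hlim : Tendsto (fun t ↦ (1 + t) ^ (2 * Fintype.card ι) * Real.exp (Q.eval t) ^ 2)
      atTop (𝓝 0) := by
    simpa [mul_pow, ← pow_mul, mul_comm] using
      (tendsto_one_add_pow_mul_exp_eval (Fintype.card ι) hQ hQ').pow 2
  have hcont : Continuous fun t ↦ (1 + t) ^ (2 * Fintype.card ι) * Real.exp (Q.eval t) ^ 2 := by
    have := Q.continuous
    fun_prop
  have hsmall : ∀ᶠ y in cocompact (ι → ℝ) ⊓ 𝓟 (Set.Ici 0),
      weightedDiscriminant Q univ y ≤ weightedDiscriminant Q univ x₀ := by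
    filter_upwards [eventually_cocompact_prod_le hcont (fun t ht ↦ by positivity) hlim hpos,
      mem_inf_of_right (mem_principal_self _)] with y hy hy0
    exact (weightedDiscriminant_le Q fun i _ ↦ hy0 i).trans hy
  obtain ⟨x, hx, hmax⟩ := (continuous_weightedDiscriminant Q univ).continuousOn.exists_isMaxOn'
    isClosed_Ici hx₀ hsmall
  exact ⟨x, hx, hpos.trans_le (hmax hx₀), hmax⟩

lemma norm_weightedNodal_erase_le_of_isMaxOn [Fintype ι] {Q : ℝ[X]} {x : ι → ℝ} (hx : 0 ≤ x)
    (hpos : 0 < weightedDiscriminant Q univ x)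
    (hmax : IsMaxOn (weightedDiscriminant Q univ) (Set.Ici 0) x) (k : ι) {t : ℝ} (ht : 0 ≤ t) :
    ‖weightedNodal Q (univ.erase k) x t‖ ≤ ‖weightedNodal Q (univ.erase k) x (x k)‖ := by
  have hself := weightedDiscriminant_update Q univ x (mem_univ k) (x k)
  rw [Function.update_eq_self] at hself
  have hle := hmax (show Function.update x k t ∈ Set.Ici 0 from
    le_update_iff.mpr ⟨ht, fun i _ ↦ hx i⟩)
  rw [Set.mem_ofPred_eq, weightedDiscriminant_update Q univ x (mem_univ k), hself] at hle
  rw [hself] at hpos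
  exact le_of_sq_le_sq (le_of_mul_le_mul_right hle (pos_of_mul_pos_right hpos (by positivity)))
    (norm_nonneg _)

end WeightedDiscriminant

/-- A Fekete configuration: points `x k ≥ 0` maximising the weighted discriminant on `[0, ∞)`,
recorded through the consequences of maximality. The number `M` is the size of
`exp Q ∏ (z - x k)`. -/
structure FeketeConfiguration {n : ℕ} (E : EquilibriumField n) where
  x : Fin E.N → ℝ
  M : ℝ
  x_nonneg : 0 ≤ x
  x_injective : Function.Injective x
  M_pos : 0 < M
  norm_erase_le : ∀ k, ∀ t : ℝ, 0 ≤ t → ‖weightedNodal E.Q (Finset.univ.erase k) x t‖ ≤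
    ‖weightedNodal E.Q (Finset.univ.erase k) x (x k)‖
  norm_le : ∀ t : ℝ, 0 ≤ t → ‖weightedNodal E.Q Finset.univ x t‖ ≤ M * (1 + t)
  M_le : ∀ k, M ≤ (1 + x k) * ‖weightedNodal E.Q (Finset.univ.erase k) x (x k)‖

namespace EquilibriumField

variable {n : ℕ} (E : EquilibriumField n)

lemma coeff_Q_neg : E.Q.coeff (n + 2) < 0 := by
  have := E.coeff_Q_top
  have := div_pos E.κ_pos E.ρ_pos
  by_contra! h
  nlinarith [mul_nonneg h (show (0 : ℝ) ≤ n + 2 by positivity)]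

lemma natDegree_Q : E.Q.natDegree = n + 2 :=
  natDegree_eq_of_le_of_coeff_ne_zero E.natDegree_Q_le E.coeff_Q_neg.ne

lemma leadingCoeff_Q_neg : E.Q.leadingCoeff < 0 := by
  rw [leadingCoeff, natDegree_Q]
  exact E.coeff_Q_neg

lemma nonempty_feketeConfiguration : Nonempty (FeketeConfiguration E) := by
  have hdeg : 1 < E.Q.degree := by
    rw [degree_eq_natDegree (leadingCoeff_ne_zero.mp E.leadingCoeff_Q_neg.ne), natDegree_Q]
    exact_mod_cast Nat.lt_add_left n one_lt_two
  obtain ⟨x, hx, hpos, hmax⟩ := exists_isMaxOn_weightedDiscriminant (ι := Fin E.N) hdeg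
    E.leadingCoeff_Q_neg
  have hinj : Function.Injective x := Set.injOn_univ.mp
    (by simpa using injOn_of_weightedDiscriminant_pos E.Q hpos)
  have hqpos : ∀ k, 0 < (1 + x k) * ‖weightedNodal E.Q (Finset.univ.erase k) x (x k)‖ := fun k ↦ by
    have := hx k
    have hne : weightedNodal E.Q (Finset.univ.erase k) x (x k) ≠ 0 := by
      rw [weightedNodal_eq_prod]
      refine mul_ne_zero (exp_ne_zero _) (Finset.prod_ne_zero_iff.mpr fun j hj ↦ ?_)
      exact sub_ne_zero.mpr (ofReal_injective.ne (hinj.ne (Finset.ne_of_mem_erase hj).symm))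
    exact mul_pos (add_pos_of_pos_of_nonneg one_pos this) (norm_pos_iff.mpr hne)
  have : Nonempty (Fin E.N) := ⟨⟨0, E.N_pos⟩⟩
  obtain ⟨k, hk⟩ := Finite.exists_min
    fun k ↦ (1 + x k) * ‖weightedNodal E.Q (Finset.univ.erase k) x (x k)‖
  refine ⟨⟨x, _, hx, hinj, hqpos k, fun k t ↦
    norm_weightedNodal_erase_le_of_isMaxOn hx hpos hmax k, fun t ht ↦ ?_, hk⟩⟩
  rw [weightedNodal_eq_sub_mul _ _ _ (Finset.mem_univ k), norm_mul, ← ofReal_sub, norm_real,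
    Real.norm_eq_abs]
  calc |t - x k| * ‖weightedNodal E.Q (Finset.univ.erase k) x t‖
      ≤ ((1 + t) * (1 + x k)) * ‖weightedNodal E.Q (Finset.univ.erase k) x (x k)‖ := by
        gcongr
        · exact mul_nonneg (by positivity) (add_nonneg zero_le_one (hx k))
        · exact abs_sub_le_one_add_mul_one_add ht (hx k)
        · exact norm_weightedNodal_erase_le_of_isMaxOn hx hpos hmax k ht
    _ = _ := by ring

end EquilibriumField

section Pullback

/-- The polynomial `ζ (cutMap ρ ζ - x)`. -/
noncomputable def cutFactor (ρ x : ℝ) (ζ : ℂ) : ℂ :=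
  ζ * (ρ ^ 2 - x : ℝ) + ((ρ ^ 2 - 1) / 2 : ℝ) * (ζ ^ 2 + 1)

lemma cutFactor_eq (ρ x : ℝ) {ζ : ℂ} (hζ : ζ ≠ 0) : cutFactor ρ x ζ = ζ * (cutMap ρ ζ - x) := by
  rw [cutFactor, cutMap, joukowski]
  push_cast
  field_simp
  ring

lemma differentiable_cutFactor (ρ x : ℝ) : Differentiable ℂ (cutFactor ρ x) := by
  unfold cutFactor
  fun_prop

/-- The factor of `2 (1 + cutMap ρ ζ) = edgeFactor ρ ζ * edgeFactor ρ ζ⁻¹` without zeros in the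
closed unit disc. -/
noncomputable def edgeFactor (ρ : ℝ) (ζ : ℂ) : ℂ := (ρ + 1 : ℝ) + (ρ - 1 : ℝ) * ζ

lemma differentiable_edgeFactor (ρ : ℝ) : Differentiable ℂ (edgeFactor ρ) := by
  unfold edgeFactor
  fun_prop

lemma edgeFactor_mul_edgeFactor_inv (ρ : ℝ) {ζ : ℂ} (hζ : ζ ≠ 0) :
    edgeFactor ρ ζ * edgeFactor ρ ζ⁻¹ = 2 * (1 + cutMap ρ ζ) := by
  rw [edgeFactor, edgeFactor, cutMap, joukowski]
  push_cast
  field_simp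
  ring

lemma norm_edgeFactor_sq_of_norm_eq_one (ρ : ℝ) {ζ : ℂ} (hζ : ‖ζ‖ = 1) :
    ‖edgeFactor ρ ζ‖ ^ 2 = 2 * (1 + (ρ ^ 2 + (ρ ^ 2 - 1) * ζ.re)) := by
  have hmul := edgeFactor_mul_edgeFactor_inv ρ (norm_ne_zero_iff.mp (hζ ▸ one_ne_zero))
  have hconj : edgeFactor ρ (conj ζ) = conj (edgeFactor ρ ζ) := by simp [edgeFactor]
  rw [Complex.inv_eq_conj hζ, hconj, cutMap_of_norm_eq_one ρ hζ, mul_conj, normSq_eq_norm_sq]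
    at hmul
  exact_mod_cast hmul

variable {ρ : ℝ} {ζ : ℂ}

lemma two_le_norm_edgeFactor (hρ : 1 ≤ ρ) (hζ : ‖ζ‖ ≤ 1) : 2 ≤ ‖edgeFactor ρ ζ‖ := by
  have hsub := norm_sub_norm_le ((ρ + 1 : ℝ) : ℂ) (-((ρ - 1 : ℝ) * ζ))
  rw [norm_neg, sub_neg_eq_add, norm_mul, norm_real, norm_real, Real.norm_of_nonneg (by linarith),
    Real.norm_of_nonneg (by linarith)] at hsub
  unfold edgeFactor
  nlinarith

lemma edgeFactor_ne_zero (hρ : 1 ≤ ρ) (hζ : ‖ζ‖ ≤ 1) : edgeFactor ρ ζ ≠ 0 :=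
  norm_pos_iff.mp (two_pos.trans_le (two_le_norm_edgeFactor hρ hζ))

lemma norm_edgeFactor_sq_le (hρ : 1 ≤ ρ) (h0 : ζ ≠ 0) (h1 : ‖ζ‖ ≤ 1) :
    ‖edgeFactor ρ ζ‖ ^ 2 ≤ 4 * (3 + ‖cutMap ρ ζ‖) := by
  have hmul : (cutMap ρ ζ - 1) * ζ = ((ρ ^ 2 - 1) / 2 : ℝ) * (1 + ζ) ^ 2 := by
    rw [cutMap, joukowski]
    push_cast
    field_simp
    ring
  have hmul := congrArg norm hmul
  rw [norm_mul, norm_mul, norm_pow, norm_real, Real.norm_of_nonneg (by nlinarith)] at hmul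
  have hcut : (ρ - 1) ^ 2 / 2 * ‖1 + ζ‖ ^ 2 ≤ ‖cutMap ρ ζ‖ + 1 := by
    calc (ρ - 1) ^ 2 / 2 * ‖1 + ζ‖ ^ 2 ≤ (ρ ^ 2 - 1) / 2 * ‖1 + ζ‖ ^ 2 := by
          gcongr
          nlinarith
      _ ≤ ‖cutMap ρ ζ - 1‖ := by
        rw [← hmul]
        exact mul_le_of_le_one_right (norm_nonneg _) h1
      _ ≤ ‖cutMap ρ ζ‖ + 1 := (norm_sub_le _ _).trans_eq (by rw [norm_one])
  have hedge : ‖edgeFactor ρ ζ‖ ≤ 2 + (ρ - 1) * ‖1 + ζ‖ := by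
    have : edgeFactor ρ ζ = 2 + (ρ - 1 : ℝ) * (1 + ζ) := by
      rw [edgeFactor]
      push_cast
      ring
    rw [this]
    refine (norm_add_le _ _).trans ?_
    rw [norm_mul, norm_real, Real.norm_of_nonneg (by linarith), norm_ofNat]
  nlinarith [sq_nonneg (2 - (ρ - 1) * ‖1 + ζ‖), pow_le_pow_left₀ (norm_nonneg _) hedge 2]

namespace FeketeConfiguration

variable {n : ℕ} {E : EquilibriumField n} (F : FeketeConfiguration E)

/-- The function `exp Q ∏ (z - x k)`, which satisfies the differential equation once all the points
`x k` are positive. -/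
noncomputable def solution : ℂ → ℂ := weightedNodal E.Q Finset.univ F.x

lemma solution_eq_sub_mul (k : Fin E.N) (z : ℂ) :
    F.solution z = (z - F.x k) * weightedNodal E.Q (Finset.univ.erase k) F.x z :=
  weightedNodal_eq_sub_mul _ _ _ (Finset.mem_univ k) z

lemma differentiable_solution : Differentiable ℂ F.solution := differentiable_weightedNodal _ _ _

/-- The analytic function of modulus `|F.solution (cutMap ζ)| exp (-E.potential ζ)` on the unit
disc. -/
noncomputable def pullback (ζ : ℂ) : ℂ := (∏ k, cutFactor E.ρ (F.x k) ζ) * exp (2 * aeval ζ E.b)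

lemma differentiable_pullback : Differentiable ℂ F.pullback := by
  have hprod : Differentiable ℂ fun ζ ↦ ∏ k, cutFactor E.ρ (F.x k) ζ :=
    Differentiable.fun_finsetProd fun k _ ↦ differentiable_cutFactor E.ρ (F.x k)
  exact hprod.mul (E.b.differentiable_aeval.const_mul 2).cexp

lemma norm_pullback (h0 : ζ ≠ 0) :
    ‖F.pullback ζ‖ = ‖F.solution (cutMap E.ρ ζ)‖ * Real.exp (-E.potential ζ) := by
  have hpow : ‖ζ‖ ^ E.N = Real.exp (E.N * Real.log ‖ζ‖) := by
    rw [← Real.log_pow, Real.exp_log (pow_pos (norm_pos_iff.mpr h0) _)]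
  rw [pullback, solution, weightedNodal_eq_prod, cutMap, E.isEquilibriumPair.field ζ h0,
    ← cutMap]
  simp only [cutFactor_eq _ _ h0, Finset.prod_mul_distrib, Finset.prod_const, Finset.card_univ,
    Fintype.card_fin, norm_mul, norm_pow, norm_exp, hpow]
  rw [mul_right_comm, ← Real.exp_add, mul_right_comm, ← Real.exp_add, EquilibriumField.potential,
    sub_re, add_re, ← ofReal_ofNat 2, re_ofReal_mul]
  congr 2
  ring

lemma norm_pullback_of_norm_eq_one (hζ : ‖ζ‖ = 1) :
    ‖F.pullback ζ‖ = ‖F.solution (cutMap E.ρ ζ)‖ := by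
  rw [F.norm_pullback (norm_ne_zero_iff.mp (hζ ▸ one_ne_zero)), E.potential_of_norm_eq_one hζ]
  simp

end FeketeConfiguration

end Pullback

section UpperBound

namespace FeketeConfiguration

variable {n : ℕ} {E : EquilibriumField n} (F : FeketeConfiguration E) {ζ z : ℂ} {K : ℝ}

lemma norm_pullback_le (hζ : ‖ζ‖ ≤ 1) : ‖F.pullback ζ‖ ≤ F.M / 2 * ‖edgeFactor E.ρ ζ‖ ^ 2 := by
  have hρ : 1 ≤ E.ρ := by linarith [E.ten_le_ρ]
  have hquot : ‖F.pullback ζ / edgeFactor E.ρ ζ ^ 2‖ ≤ F.M / 2 := by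
    refine Complex.norm_le_of_forall_mem_frontier_norm_le (U := Metric.ball 0 1)
      (f := fun ζ ↦ F.pullback ζ / edgeFactor E.ρ ζ ^ 2) Metric.isBounded_ball ?_ ?_ ?_
    · refine DifferentiableOn.diffContOnCl fun z hz ↦ ?_
      rw [closure_ball _ one_ne_zero, mem_closedBall_zero_iff] at hz
      exact ((F.differentiable_pullback z).div ((differentiable_edgeFactor E.ρ z).pow 2)
        (pow_ne_zero _ (edgeFactor_ne_zero hρ hz))).differentiableWithinAt
    · intro z hz
      rw [frontier_ball _ one_ne_zero, mem_sphere_zero_iff_norm] at hz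
      have ht := one_le_cutMap_re E.one_le_ρ_sq hz
      rw [norm_div, norm_pow, F.norm_pullback_of_norm_eq_one hz,
        norm_edgeFactor_sq_of_norm_eq_one _ hz, cutMap_of_norm_eq_one _ hz,
        div_le_iff₀ (by linarith)]
      exact (F.norm_le _ (by linarith)).trans_eq (by ring)
    · rwa [closure_ball _ one_ne_zero, mem_closedBall_zero_iff]
  rwa [norm_div, norm_pow,
    div_le_iff₀ (pow_pos (norm_pos_iff.mpr (edgeFactor_ne_zero hρ hζ)) 2)] at hquot

lemma norm_solution_cutMap_le (h0 : ζ ≠ 0) (h1 : ‖ζ‖ ≤ 1) : ‖F.solution (cutMap E.ρ ζ)‖ ≤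
    2 * F.M * (3 + ‖cutMap E.ρ ζ‖) * Real.exp (E.potential ζ) := by
  have hM := F.M_pos
  have hedge := norm_edgeFactor_sq_le (ρ := E.ρ) (by linarith [E.ten_le_ρ]) h0 h1
  have hpull := F.norm_pullback_le h1
  rw [F.norm_pullback h0, Real.exp_neg, mul_inv_le_iff₀ (Real.exp_pos _)] at hpull
  refine hpull.trans (mul_le_mul_of_nonneg_right ?_ (Real.exp_nonneg _))
  linarith [mul_le_mul_of_nonneg_left hedge hM.le]

lemma norm_solution_le_of_potential_le {x p : ℝ}
    (hp : ∀ ζ : ℂ, ζ ≠ 0 → ‖ζ‖ ≤ 1 → cutMap E.ρ ζ = x → E.potential ζ ≤ p)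
    (hK : 0 < K) (hz : ‖z‖ ≤ K) (hx : |x| ≤ K) :
    ‖F.solution z‖ ≤ 2 * F.M * (3 + ‖z‖) * Real.exp (p + E.κ * (K + 2) ^ (n + 1) * ‖z - x‖) := by
  have hM := F.M_pos
  obtain ⟨ζ, h0, h1, rfl⟩ := E.exists_cutMap_eq z
  obtain ⟨ζ', h0', h1', hζ'⟩ := E.exists_cutMap_eq x
  refine (F.norm_solution_cutMap_le h0 h1).trans ?_
  gcongr
  linarith [le_abs_self (E.potential ζ - E.potential ζ'), hp ζ' h0' h1' hζ',
    E.abs_potential_sub_le h0 h0' h1 h1' hK hz hζ' hx]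

lemma norm_solution_le (z : ℂ) : ‖F.solution z‖ ≤
    2 * F.M * (3 + ‖z‖) * Real.exp (E.κ * (‖z‖ + 3) ^ (n + 1) * ‖z‖) := by
  have h := F.norm_solution_le_of_potential_le (z := z) (x := 0) (K := ‖z‖ + 1)
    (fun ζ h0 h1 hζ ↦ E.potential_nonpos h0 h1 le_rfl hζ) (by positivity) (by linarith)
    (by simpa using by positivity)
  rw [zero_add, add_assoc, ofReal_zero, sub_zero] at h
  norm_num at h
  exact h

lemma norm_solution_le_near_nonneg {x r : ℝ} (hx : 0 ≤ x) (hr : r ≤ 1) (hz : ‖z - x‖ ≤ r) :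
    ‖F.solution z‖ ≤ 2 * F.M * (4 + x) * Real.exp (E.κ * (x + 3) ^ (n + 1) * r) := by
  have hM := F.M_pos
  have hκ := E.κ_pos
  have hzx : ‖z‖ ≤ x + 1 := by
    have := norm_le_norm_add_norm_sub' z x
    rw [norm_real, Real.norm_of_nonneg hx] at this
    linarith
  refine (F.norm_solution_le_of_potential_le (x := x) (p := 0) (K := x + 1)
    (fun ζ h0 h1 hζ ↦ E.potential_nonpos h0 h1 hx hζ) (by linarith) hzx
    (by rw [abs_of_nonneg hx]; linarith)).trans ?_
  rw [zero_add, add_assoc x 1 2, show (1 : ℝ) + 2 = 3 by norm_num]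
  gcongr 2 * F.M * ?_ * Real.exp (E.κ * (x + 3) ^ (n + 1) * ?_)
  linarith

lemma norm_solution_le_near_zero {r : ℝ} (hr : r ≤ 1) (hz : ‖z‖ ≤ r) : ‖F.solution z‖ ≤
    8 * F.M * Real.exp (-(E.κ / ((n + 1) * (n + 2))) + E.κ * 3 ^ (n + 1) * r) := by
  have hM := F.M_pos
  have hκ := E.κ_pos
  refine (F.norm_solution_le_of_potential_le (x := 0) (K := 1)
    (fun ζ h0 h1 hζ ↦ E.potential_le_of_cutMap_eq_zero h0 h1 (by simpa using hζ)) one_pos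
    (hz.trans hr) (by simp)).trans ?_
  rw [ofReal_zero, sub_zero, show (1 : ℝ) + 2 = 3 by norm_num]
  calc 2 * F.M * (3 + ‖z‖) * Real.exp (-(E.κ / ((n + 1) * (n + 2))) + E.κ * 3 ^ (n + 1) * ‖z‖)
      ≤ 2 * F.M * (3 + 1) * Real.exp (-(E.κ / ((n + 1) * (n + 2))) + E.κ * 3 ^ (n + 1) * r) := by
        gcongr
        exact hz.trans hr
    _ = _ := by ring

lemma norm_weightedNodal_erase_le (k : Fin E.N) {r B : ℝ} (hr : 0 < r)
    (hB : ∀ z : ℂ, ‖z - F.x k‖ ≤ r → ‖F.solution z‖ ≤ B) (hz : ‖z - F.x k‖ ≤ r) :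
    ‖weightedNodal E.Q (Finset.univ.erase k) F.x z‖ ≤ B / r := by
  refine Complex.norm_le_of_forall_mem_frontier_norm_le (U := Metric.ball (F.x k : ℂ) r)
    Metric.isBounded_ball (differentiable_weightedNodal _ _ _).diffContOnCl (fun y hy ↦ ?_) ?_
  · rw [frontier_ball _ hr.ne', mem_sphere_iff_norm] at hy
    have := hB y hy.le
    rwa [F.solution_eq_sub_mul k, norm_mul, hy, ← le_div_iff₀' hr] at this
  · rwa [closure_ball _ hr.ne', mem_closedBall_iff_norm]

/-- The points stay away from the hard edge: on `[0, 1)` the potential is so small that a point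
at `0` would contradict `F.M_le`. -/
lemma x_pos (hκ : 16 * 3 ^ (n + 1) * ((n + 1) * (n + 2)) *
    Real.exp (-(E.κ / (2 * ((n + 1) * (n + 2))))) < 1) (k : Fin E.N) : 0 < F.x k := by
  refine (F.x_nonneg k).lt_of_ne fun hx ↦ ?_
  have hM := F.M_pos
  set a : ℝ := (n + 1) * (n + 2) with ha
  set r : ℝ := 1 / (2 * 3 ^ (n + 1) * a) with hr
  have hr0 : 0 < r := by positivity
  have hr1 : r ≤ 1 := by
    have h3 : (1 : ℝ) ≤ 3 ^ (n + 1) := one_le_pow₀ (by norm_num)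
    have ha1 : 1 ≤ a := by nlinarith [n.cast_nonneg (α := ℝ)]
    rw [hr, div_le_one (by positivity)]
    nlinarith
  have hupper := F.norm_weightedNodal_erase_le k hr0 (B := 8 * F.M * Real.exp (-(E.κ / (2 * a))))
    (z := F.x k) (fun z hz ↦ ?_) (by simpa using hr0.le)
  · have hlower := F.M_le k
    rw [← hx, Pi.zero_apply, add_zero, one_mul] at hlower
    rw [← hx, Pi.zero_apply] at hupper
    have hle := hlower.trans hupper
    rw [le_div_iff₀ hr0, hr, mul_one_div, div_le_iff₀ (by positivity)] at hle
    have := mul_lt_mul_of_pos_left hκ hM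
    linarith
  · rw [← hx, Pi.zero_apply, ofReal_zero, sub_zero] at hz
    refine (F.norm_solution_le_near_zero hr1 hz).trans_eq ?_
    rw [← ha, hr]
    congr 2
    field_simp
    ring

end FeketeConfiguration

end UpperBound

section LowerBoundNearZeros

namespace EquilibriumField

variable {n : ℕ} (E : EquilibriumField n) {θ x : ℝ}

lemma one_le_κ : 1 ≤ E.κ := le_trans (by linarith [n.cast_nonneg (α := ℝ)]) E.le_κ

/-- The radius of a disc around a zero `x` in which the other factors of the solution are under
control. The factor `θ ≤ 1` is there to keep the disc close to the real axis. -/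
noncomputable def zeroRadius (θ x : ℝ) : ℝ := θ / (36 * E.κ ^ 2 * (x + 4) ^ (2 * n + 4))

lemma zeroRadius_pos (hθ : 0 < θ) (hx : 0 ≤ x) : 0 < E.zeroRadius θ x := by
  have := E.κ_pos
  unfold zeroRadius
  positivity

lemma zeroRadius_mul (θ : ℝ) (hx : 0 ≤ x) :
    E.zeroRadius θ x * (36 * E.κ ^ 2 * (x + 4) ^ (2 * n + 4)) = θ := by
  have := E.κ_pos
  exact div_mul_cancel₀ _ (by positivity)

lemma zeroRadius_mul_pow_le (hθ : 0 < θ) (hx : 0 ≤ x) {m : ℕ} (hm : m ≤ 2 * n + 4) :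
    E.zeroRadius θ x * (36 * E.κ ^ 2 * (x + 4) ^ m) ≤ θ := by
  have hr := (E.zeroRadius_pos hθ hx).le
  refine le_trans ?_ (E.zeroRadius_mul θ hx).le
  gcongr
  linarith

lemma zeroRadius_le (hθ : 0 < θ) (hx : 0 ≤ x) : E.zeroRadius θ x ≤ θ / 36 := by
  have hle := E.zeroRadius_mul_pow_le hθ hx (Nat.zero_le _)
  have hκ : 1 ≤ E.κ ^ 2 := one_le_pow₀ E.one_le_κ
  nlinarith [E.zeroRadius_pos hθ hx]

end EquilibriumField

namespace FeketeConfiguration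

variable {n : ℕ} {E : EquilibriumField n} (F : FeketeConfiguration E) (k : Fin E.N) {z : ℂ} {θ : ℝ}

lemma norm_weightedNodal_erase_le_near
    (hz : ‖z - F.x k‖ ≤ 1 / (E.κ * (F.x k + 3) ^ (n + 1))) :
    ‖weightedNodal E.Q (Finset.univ.erase k) F.x z‖ ≤
      6 * F.M * E.κ * (F.x k + 4) ^ (n + 2) := by
  have hM := F.M_pos
  have hκ := E.one_le_κ
  have hx : 0 ≤ F.x k := F.x_nonneg k
  have hpos : 1 ≤ E.κ * (F.x k + 3) ^ (n + 1) :=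
    one_le_mul_of_one_le_of_one_le hκ (one_le_pow₀ (by linarith))
  refine (F.norm_weightedNodal_erase_le k (by positivity)
    (B := 2 * F.M * (4 + F.x k) * 3) (fun y hy ↦ ?_) hz).trans ?_
  · refine (F.norm_solution_le_near_nonneg hx ((div_le_one (by positivity)).mpr hpos) hy).trans ?_
    rw [mul_one_div_cancel (by positivity)]
    gcongr
    linarith [Real.exp_one_lt_d9]
  · rw [div_div_eq_mul_div, div_one]
    calc 2 * F.M * (4 + F.x k) * 3 * (E.κ * (F.x k + 3) ^ (n + 1))
        ≤ 2 * F.M * (4 + F.x k) * 3 * (E.κ * (F.x k + 4) ^ (n + 1)) := by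
          gcongr
          norm_num
      _ = 6 * F.M * E.κ * (F.x k + 4) ^ (n + 2) := by ring

lemma norm_weightedNodal_erase_sub_le
    (hz : ‖z - F.x k‖ < 1 / (E.κ * (F.x k + 3) ^ (n + 1))) :
    ‖weightedNodal E.Q (Finset.univ.erase k) F.x z -
      weightedNodal E.Q (Finset.univ.erase k) F.x (F.x k)‖ ≤
        18 * F.M * E.κ ^ 2 * (F.x k + 4) ^ (2 * n + 3) * ‖z - F.x k‖ := by
  have hM := F.M_pos
  have hκ := E.κ_pos
  have hx : 0 ≤ F.x k := F.x_nonneg k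
  set r := 1 / (E.κ * (F.x k + 3) ^ (n + 1)) with hr
  have hr0 : 0 < r := by positivity
  set L := 6 * F.M * E.κ * (F.x k + 4) ^ (n + 2) with hL
  have hmaps : Set.MapsTo (weightedNodal E.Q (Finset.univ.erase k) F.x) (Metric.ball (F.x k) r)
      (Metric.closedBall (weightedNodal E.Q (Finset.univ.erase k) F.x (F.x k)) (3 * L)) := by
    intro y hy
    rw [mem_ball_iff_norm] at hy
    rw [mem_closedBall_iff_norm]
    refine (norm_sub_le _ _).trans ?_
    have hL0 : 0 ≤ L := by positivity
    linarith [F.norm_weightedNodal_erase_le_near k hy.le,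
      F.norm_weightedNodal_erase_le_near k (z := F.x k) (by rw [sub_self, norm_zero]; exact hr0.le)]
  have hschwarz := Complex.dist_le_div_mul_dist_of_mapsTo_ball
    (differentiable_weightedNodal _ _ _).differentiableOn hmaps (mem_ball_iff_norm.mpr hz)
  rw [dist_eq_norm, dist_eq_norm] at hschwarz
  refine hschwarz.trans (mul_le_mul_of_nonneg_right ?_ (norm_nonneg _))
  calc 3 * L / r = 18 * F.M * E.κ ^ 2 * ((F.x k + 4) ^ (n + 2) * (F.x k + 3) ^ (n + 1)) := by
        rw [hr, hL]
        field_simp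
        norm_num
    _ ≤ 18 * F.M * E.κ ^ 2 * ((F.x k + 4) ^ (n + 2) * (F.x k + 4) ^ (n + 1)) := by
        gcongr
        norm_num
    _ = 18 * F.M * E.κ ^ 2 * (F.x k + 4) ^ (2 * n + 3) := by ring

lemma le_norm_weightedNodal_erase (hθ : 0 < θ) (hθ1 : θ ≤ 1)
    (hz : ‖z - F.x k‖ ≤ E.zeroRadius θ (F.x k)) :
    F.M / (2 * (1 + F.x k)) ≤ ‖weightedNodal E.Q (Finset.univ.erase k) F.x z‖ := by
  have hM := F.M_pos
  have hκ := E.one_le_κ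
  have hx : 0 ≤ F.x k := F.x_nonneg k
  have hr := E.zeroRadius_pos hθ hx
  have hlt : E.zeroRadius θ (F.x k) < 1 / (E.κ * (F.x k + 3) ^ (n + 1)) := by
    rw [lt_div_iff₀ (by positivity)]
    have hle := E.zeroRadius_mul_pow_le hθ hx (show n + 1 ≤ 2 * n + 4 by omega)
    have : E.zeroRadius θ (F.x k) * (E.κ * (F.x k + 3) ^ (n + 1)) ≤
        E.zeroRadius θ (F.x k) * (E.κ ^ 2 * (F.x k + 4) ^ (n + 1)) := by
      gcongr
      · exact le_self_pow₀ hκ two_ne_zero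
      · norm_num
    linarith
  have hsub := F.norm_weightedNodal_erase_sub_le k (hz.trans_lt hlt)
  rw [norm_sub_rev] at hsub
  have hsub := (norm_sub_norm_le _ _).trans hsub
  have hM_le := F.M_le k
  have hsmall : 18 * F.M * E.κ ^ 2 * (F.x k + 4) ^ (2 * n + 3) * ‖z - F.x k‖ * (F.x k + 4) ≤
      F.M / 2 := by
    calc _ ≤ 18 * F.M * E.κ ^ 2 * (F.x k + 4) ^ (2 * n + 3) * E.zeroRadius θ (F.x k) *
          (F.x k + 4) := by gcongr
      _ = F.M / 2 * (E.zeroRadius θ (F.x k) * (36 * E.κ ^ 2 * (F.x k + 4) ^ (2 * n + 4))) := by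
        ring
      _ ≤ F.M / 2 := by
        rw [E.zeroRadius_mul θ hx]
        exact mul_le_of_le_one_right (by positivity) hθ1
  have hnonneg : 0 ≤ 18 * F.M * E.κ ^ 2 * (F.x k + 4) ^ (2 * n + 3) * ‖z - F.x k‖ := by positivity
  rw [div_le_iff₀ (by positivity)]
  nlinarith

lemma le_norm_solution_mul_pow (hθ : 0 < θ) (hθ1 : θ ≤ 1)
    (hz : ‖z - F.x k‖ = E.zeroRadius θ (F.x k)) :
    θ * F.M / (72 * E.κ ^ 2 * 8 ^ (2 * n + 5)) ≤ ‖F.solution z‖ * ‖1 + z‖ ^ (2 * n + 5) := by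
  have hM := F.M_pos
  have hκ := E.κ_pos
  have hx : 0 ≤ F.x k := F.x_nonneg k
  have hr := E.zeroRadius_pos hθ hx
  have herase : F.M / (2 * (F.x k + 4)) ≤ ‖weightedNodal E.Q (Finset.univ.erase k) F.x z‖ :=
    (div_le_div_of_nonneg_left hM.le (by positivity) (by linarith)).trans
      (F.le_norm_weightedNodal_erase k hθ hθ1 hz.le)
  have hone : (F.x k + 4) / 8 ≤ ‖1 + z‖ := by
    have hsub := norm_sub_norm_le ((1 + F.x k : ℝ) : ℂ) (-(z - F.x k))
    rw [norm_real, Real.norm_of_nonneg (by linarith), norm_neg, hz] at hsub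
    have : ((1 + F.x k : ℝ) : ℂ) - -(z - F.x k) = 1 + z := by
      push_cast
      ring
    rw [this] at hsub
    linarith [E.zeroRadius_le hθ hx]
  calc θ * F.M / (72 * E.κ ^ 2 * 8 ^ (2 * n + 5))
      = E.zeroRadius θ (F.x k) * (F.M / (2 * (F.x k + 4))) * ((F.x k + 4) / 8) ^ (2 * n + 5) := by
        rw [EquilibriumField.zeroRadius, div_pow, pow_succ (F.x k + 4) (2 * n + 4)]
        field_simp
        norm_num
    _ ≤ ‖F.solution z‖ * ‖1 + z‖ ^ (2 * n + 5) := by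
        rw [F.solution_eq_sub_mul k, norm_mul, hz]
        gcongr

end FeketeConfiguration

end LowerBoundNearZeros

section RadialMaximumPrinciple

open Filter Topology

lemma norm_le_of_forall_frontier_exists_norm_lt {f : ℂ → ℂ} {U : Set ℂ} (hU : Bornology.IsBounded U)
    (hf : DiffContOnCl ℂ f U) {B : ℝ}
    (hB : ∀ z ∈ frontier U, ‖f z‖ ≤ B ∨ ∃ y ∈ U, ‖f z‖ < ‖f y‖) {z : ℂ} (hz : z ∈ U) :
    ‖f z‖ ≤ B := by
  obtain ⟨z₀, hz₀, hmax⟩ := Complex.exists_mem_frontier_isMaxOn_norm hU ⟨z, hz⟩ hf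
  have hle : ∀ y ∈ U, ‖f y‖ ≤ ‖f z₀‖ := fun y hy ↦ hmax (subset_closure hy)
  rcases hB z₀ hz₀ with h | ⟨y, hy, hlt⟩
  · exact (hle z hz).trans h
  · exact absurd (hle y hy) hlt.not_ge

lemma eventually_norm_lt_of_re_mul_logDeriv_neg {f : ℂ → ℂ} {z : ℂ} (hf : DifferentiableAt ℂ f z)
    (h0 : f z ≠ 0) (hneg : (z * logDeriv f z).re < 0) :
    ∀ᶠ s : ℝ in 𝓝[<] 1, ‖f z‖ < ‖f (s * z)‖ := by
  have hderiv : HasDerivAt (fun s : ℝ ↦ (f (s * z) / f z).re) (z * logDeriv f z).re 1 := by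
    have hmul : HasDerivAt (fun s : ℂ ↦ s * z) z ((1 : ℝ) : ℂ) := by
      simpa using (hasDerivAt_id ((1 : ℝ) : ℂ)).mul_const z
    have hfz : HasDerivAt f (deriv f z) (((1 : ℝ) : ℂ) * z) := by simpa using hf.hasDerivAt
    have := ((hfz.comp ((1 : ℝ) : ℂ) hmul).div_const (f z)).real_of_complex
    rwa [mul_div_right_comm, mul_comm (deriv f z / f z)] at this
  rw [hasDerivAt_iff_tendsto_slope_left_right] at hderiv
  filter_upwards [hderiv.1.eventually (gt_mem_nhds hneg), self_mem_nhdsWithin] with s hs hs1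
  have hre : 1 < (f (s * z) / f z).re := by
    have hs1 : s - 1 < 0 := sub_neg.mpr hs1
    rw [slope_def_field, ofReal_one, one_mul, div_self h0, one_re, div_neg_iff] at hs
    rcases hs with h | h <;> linarith
  have := hre.trans_le (re_le_norm _)
  rwa [norm_div, lt_div_iff₀ (norm_pos_iff.mpr h0), one_mul] at this

end RadialMaximumPrinciple

section EdgeWeight

variable {ρ : ℝ} {ζ : ℂ}

/-- The Möbius map from the unit disc into the right half plane with denominator `edgeFactor`. -/
noncomputable def edgeMobius (ρ : ℝ) (ζ : ℂ) : ℂ := 2 * (ρ + 1 : ℝ) / edgeFactor ρ ζ - 1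

lemma edgeMobius_eq_div (h : edgeFactor ρ ζ ≠ 0) :
    edgeMobius ρ ζ = ((ρ + 1 : ℝ) - (ρ - 1 : ℝ) * ζ) / edgeFactor ρ ζ := by
  rw [edgeMobius, div_sub_one h, edgeFactor]
  ring

lemma edgeMobius_re (h : edgeFactor ρ ζ ≠ 0) : (edgeMobius ρ ζ).re * ‖edgeFactor ρ ζ‖ ^ 2 =
    (ρ + 1) ^ 2 - (ρ - 1) ^ 2 * ‖ζ‖ ^ 2 := by
  have hmul : edgeMobius ρ ζ * (normSq (edgeFactor ρ ζ) : ℝ) =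
      ((ρ + 1 : ℝ) - (ρ - 1 : ℝ) * ζ) * conj (edgeFactor ρ ζ) := by
    rw [edgeMobius_eq_div h, normSq_eq_conj_mul_self]
    field_simp
  have hre := congrArg re hmul
  rw [re_mul_ofReal, normSq_eq_norm_sq] at hre
  rw [hre, ← normSq_eq_norm_sq, normSq_apply]
  simp [edgeFactor]
  ring

lemma re_edgeMobius_nonneg (hρ : 1 ≤ ρ) (hζ : ‖ζ‖ ≤ 1) : 0 ≤ (edgeMobius ρ ζ).re := by
  have : 0 < ‖edgeFactor ρ ζ‖ := norm_pos_iff.mpr (edgeFactor_ne_zero hρ hζ)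
  refine nonneg_of_mul_nonneg_left (b := ‖edgeFactor ρ ζ‖ ^ 2) ?_ (by positivity)
  rw [edgeMobius_re (norm_pos_iff.mp this)]
  nlinarith [mul_nonneg (sq_nonneg (ρ - 1)) (sub_nonneg.mpr (pow_le_one₀ (n := 2)
    (norm_nonneg ζ) hζ))]

lemma re_edgeMobius_le (hρ : 1 ≤ ρ) (hζ : ‖ζ‖ ≤ 1) : (edgeMobius ρ ζ).re ≤ ρ + 2 := by
  have hA := two_le_norm_edgeFactor hρ hζ
  refine (re_le_norm _).trans ((norm_sub_le _ _).trans ?_)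
  rw [norm_div, norm_mul, norm_ofNat, norm_one, norm_real, Real.norm_of_nonneg (by linarith)]
  have : 2 * (ρ + 1) / ‖edgeFactor ρ ζ‖ ≤ 2 * (ρ + 1) / 2 := by gcongr
  linarith

lemma norm_edgeMobius_sq_add_one_mul (h : edgeFactor ρ ζ ≠ 0) :
    (‖edgeMobius ρ ζ‖ ^ 2 + 1) * ‖edgeFactor ρ ζ‖ ^ 2 =
      2 * ((ρ + 1) ^ 2 + (ρ - 1) ^ 2 * ‖ζ‖ ^ 2) := by
  have : ‖edgeFactor ρ ζ‖ ≠ 0 := norm_ne_zero_iff.mpr h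
  rw [edgeMobius_eq_div h, norm_div, div_pow, add_mul, div_mul_cancel₀ _ (by positivity), one_mul,
    ← normSq_eq_norm_sq, ← normSq_eq_norm_sq, ← normSq_eq_norm_sq, normSq_apply, normSq_apply,
    normSq_apply]
  simp [edgeFactor]
  ring

lemma hasDerivAt_edgeFactor (ρ : ℝ) (ζ : ℂ) : HasDerivAt (edgeFactor ρ) (ρ - 1 : ℝ) ζ :=
  (((hasDerivAt_id ζ).const_mul _).const_add _).congr_deriv (mul_one _)

lemma logDeriv_edgeFactor (h : edgeFactor ρ ζ ≠ 0) :
    ζ * logDeriv (edgeFactor ρ) ζ = (1 - edgeMobius ρ ζ) / 2 := by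
  rw [logDeriv_apply, (hasDerivAt_edgeFactor ρ ζ).deriv, edgeMobius_eq_div h]
  field_simp
  rw [edgeFactor]
  ring

lemma hasDerivAt_edgeMobius (h : edgeFactor ρ ζ ≠ 0) : HasDerivAt (edgeMobius ρ)
    (-(2 * (ρ + 1 : ℝ) * (ρ - 1 : ℝ)) / edgeFactor ρ ζ ^ 2) ζ :=
  (((hasDerivAt_const ζ _).div (hasDerivAt_edgeFactor ρ ζ) h).sub_const 1).congr_deriv (by ring)

lemma mul_deriv_edgeMobius (h : edgeFactor ρ ζ ≠ 0) :
    ζ * deriv (edgeMobius ρ) ζ = (edgeMobius ρ ζ ^ 2 - 1) / 2 := by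
  rw [(hasDerivAt_edgeMobius h).deriv, edgeMobius_eq_div h]
  field_simp
  rw [edgeFactor]
  ring

/-- The constant for which `exp (2 * edgeRate ρ * edgeMobius ρ ζ)` compensates the logarithmic
derivative of `edgeFactor ρ ζ ^ 4` at the two end points `ζ = ± 1`. -/
noncomputable def edgeRate (ρ : ℝ) : ℝ := 2 * ρ / (ρ ^ 2 + 1)

lemma edgeRate_nonneg (hρ : 1 ≤ ρ) : 0 ≤ edgeRate ρ := by
  unfold edgeRate
  positivity

/-- A weight of size `edgeFactor ρ ζ ^ 4` in the unit disc, whose logarithmic derivative has a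
positive radial part near the end points `ζ = ± 1`. -/
noncomputable def edgeWeight (ρ : ℝ) (ζ : ℂ) : ℂ :=
  edgeFactor ρ ζ ^ 4 * exp (2 * edgeRate ρ * edgeMobius ρ ζ)

lemma differentiableAt_edgeWeight (h : edgeFactor ρ ζ ≠ 0) :
    DifferentiableAt ℂ (edgeWeight ρ) ζ :=
  ((differentiable_edgeFactor ρ ζ).pow 4).mul
    ((hasDerivAt_edgeMobius h).differentiableAt.const_mul _).cexp

lemma edgeWeight_ne_zero (h : edgeFactor ρ ζ ≠ 0) : edgeWeight ρ ζ ≠ 0 :=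
  mul_ne_zero (pow_ne_zero _ h) (exp_ne_zero _)

lemma norm_edgeWeight (ρ : ℝ) (ζ : ℂ) : ‖edgeWeight ρ ζ‖ =
    (‖edgeFactor ρ ζ‖ ^ 2) ^ 2 * Real.exp (2 * edgeRate ρ * (edgeMobius ρ ζ).re) := by
  rw [edgeWeight, norm_mul, norm_pow, norm_exp, ← pow_mul, ← ofReal_ofNat 2, ← ofReal_mul,
    re_ofReal_mul]

lemma mul_logDeriv_edgeWeight (h : edgeFactor ρ ζ ≠ 0) : ζ * logDeriv (edgeWeight ρ) ζ =
    2 * (1 - edgeMobius ρ ζ) + edgeRate ρ * (edgeMobius ρ ζ ^ 2 - 1) := by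
  have hmob := (hasDerivAt_edgeMobius h).differentiableAt
  have hexp : logDeriv (fun ζ ↦ exp (2 * edgeRate ρ * edgeMobius ρ ζ)) ζ =
      2 * edgeRate ρ * deriv (edgeMobius ρ) ζ := by
    rw [logDeriv_apply, deriv_cexp (hmob.const_mul _), deriv_const_mul _ hmob]
    field_simp
  have hedge := differentiable_edgeFactor ρ ζ
  have hmul : logDeriv (edgeWeight ρ) ζ = 4 * logDeriv (edgeFactor ρ) ζ +
      2 * edgeRate ρ * deriv (edgeMobius ρ) ζ :=
    (logDeriv_mul (f := fun ζ ↦ edgeFactor ρ ζ ^ 4)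
      (g := fun ζ ↦ exp (2 * edgeRate ρ * edgeMobius ρ ζ)) ζ (pow_ne_zero 4 h) (exp_ne_zero _)
      (hedge.pow 4) (hmob.const_mul _).cexp).trans
      (congrArg₂ (· + ·) (logDeriv_fun_pow hedge 4) hexp)
  rw [hmul]
  linear_combination 4 * logDeriv_edgeFactor h + 2 * edgeRate ρ * mul_deriv_edgeMobius h

lemma re_mul_logDeriv_edgeWeight_of_norm_eq_one (hρ : 1 ≤ ρ) (hζ : ‖ζ‖ = 1) :
    (ζ * logDeriv (edgeWeight ρ) ζ).re = 2 - 2 * edgeRate ρ -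
      2 * edgeRate ρ / (1 + (ρ ^ 2 + (ρ ^ 2 - 1) * ζ.re)) ^ 2 * ((ρ ^ 2 - 1) ^ 2 * ζ.im ^ 2) := by
  have hA := edgeFactor_ne_zero hρ hζ.le
  have hre := edgeMobius_re hA
  have hnorm := norm_edgeMobius_sq_add_one_mul hA
  have hone := one_le_cutMap_re (ρ := ρ) (by nlinarith) hζ
  rw [norm_edgeFactor_sq_of_norm_eq_one ρ hζ, hζ] at hre hnorm
  set u := 1 + (ρ ^ 2 + (ρ ^ 2 - 1) * ζ.re) with hu
  have hu0 : 2 ≤ u := by linarith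
  have him : (ρ ^ 2 - 1) ^ 2 * ζ.im ^ 2 = (u - 2) * (2 * ρ ^ 2 - u) := by
    rw [hu]
    linear_combination (ρ ^ 2 - 1) ^ 2 * re_sq_add_im_sq_of_norm_eq_one hζ
  have hre : (edgeMobius ρ ζ).re = 2 * ρ / u := by
    rw [eq_div_iff (by positivity)]
    linarith
  have hnorm : ‖edgeMobius ρ ζ‖ ^ 2 = 2 * (ρ ^ 2 + 1) / u - 1 := by
    rw [eq_sub_iff_add_eq, eq_div_iff (by positivity)]
    linarith
  have hsq : (edgeMobius ρ ζ ^ 2).re = 2 * (edgeMobius ρ ζ).re ^ 2 - ‖edgeMobius ρ ζ‖ ^ 2 := by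
    rw [← normSq_eq_norm_sq, normSq_apply, pow_two, mul_re]
    ring
  rw [mul_logDeriv_edgeWeight hA, add_re, ← ofReal_ofNat 2, re_ofReal_mul, re_ofReal_mul, sub_re,
    sub_re, one_re, hsq, hre, hnorm, him, edgeRate]
  field_simp
  ring

lemma le_re_mul_logDeriv_edgeWeight (hρ : 10 ≤ ρ) (hζ : ‖ζ‖ = 1) :
    3 / 2 - (ρ ^ 2 - 1) ^ 2 * ζ.im ^ 2 / ρ ≤ (ζ * logDeriv (edgeWeight ρ) ζ).re := by
  have hone := one_le_cutMap_re (ρ := ρ) (by nlinarith) hζ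
  rw [re_mul_logDeriv_edgeWeight_of_norm_eq_one (by linarith) hζ]
  set u := 1 + (ρ ^ 2 + (ρ ^ 2 - 1) * ζ.re)
  have hu0 : 2 ≤ u := by linarith
  have hrate : edgeRate ρ ≤ 1 / 4 := by
    rw [edgeRate, div_le_iff₀ (by positivity)]
    nlinarith
  have hcoeff : 2 * edgeRate ρ / u ^ 2 ≤ 1 / ρ := by
    rw [div_le_div_iff₀ (by positivity) (by positivity), edgeRate, mul_div_assoc',
      div_mul_eq_mul_div, div_le_iff₀ (by positivity)]
    nlinarith [pow_le_pow_left₀ zero_le_two hu0 2]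
  have := mul_le_mul_of_nonneg_right hcoeff
    (show 0 ≤ (ρ ^ 2 - 1) ^ 2 * ζ.im ^ 2 by positivity)
  rw [div_eq_inv_mul _ ρ, ← one_div]
  linarith

end EdgeWeight

section Comparison

variable {ρ : ℝ} {ζ : ℂ}

lemma re_mul_logDeriv_cutFactor_of_norm_eq_one {x : ℝ} (hζ : ‖ζ‖ = 1) (hne : cutFactor ρ x ζ ≠ 0) :
    (ζ * logDeriv (cutFactor ρ x) ζ).re = 1 := by
  have h0 : ζ ≠ 0 := norm_ne_zero_iff.mp (hζ ▸ one_ne_zero)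
  have hcut := cutFactor_eq ρ x h0
  rw [cutMap_of_norm_eq_one ρ hζ, ← ofReal_sub] at hcut
  have hreal : ρ ^ 2 + (ρ ^ 2 - 1) * ζ.re - x ≠ 0 := by
    rintro h
    simp [hcut, h] at hne
  have hderiv : HasDerivAt (cutFactor ρ x) ((ρ ^ 2 - x : ℝ) + (ρ ^ 2 - 1 : ℝ) * ζ) ζ := by
    refine (((hasDerivAt_id ζ).mul_const _).add
      (((hasDerivAt_pow 2 ζ).add_const 1).const_mul _)).congr_deriv ?_
    push_cast
    ring
  rw [logDeriv_apply, hderiv.deriv, hcut, ← mul_div_assoc, mul_div_mul_left _ _ h0, div_ofReal_re,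
    add_re, ofReal_re, re_ofReal_mul, div_eq_one_iff_eq hreal]
  ring

namespace FeketeConfiguration

variable {n : ℕ} {E : EquilibriumField n} (F : FeketeConfiguration E)

lemma pullback_ne_zero (hne : ∀ k, cutFactor E.ρ (F.x k) ζ ≠ 0) : F.pullback ζ ≠ 0 :=
  mul_ne_zero (Finset.prod_ne_zero_iff.mpr fun k _ ↦ hne k) (exp_ne_zero _)

lemma re_mul_logDeriv_pullback_of_norm_eq_one (hζ : ‖ζ‖ = 1)
    (hne : ∀ k, cutFactor E.ρ (F.x k) ζ ≠ 0) : (ζ * logDeriv F.pullback ζ).re =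
      E.κ / E.ρ * ((E.ρ ^ 2 + (E.ρ ^ 2 - 1) * ζ.re) ^ n * ((E.ρ ^ 2 - 1) ^ 2 * ζ.im ^ 2)) := by
  have hb := E.b.hasDerivAt_aeval ζ
  have hexp : logDeriv (fun ζ ↦ exp (2 * aeval ζ E.b)) ζ = 2 * aeval ζ (derivative E.b) := by
    rw [logDeriv_apply, (hb.const_mul 2).cexp.deriv]
    field_simp
  have hcut : ∀ k ∈ Finset.univ, DifferentiableAt ℂ (cutFactor E.ρ (F.x k)) ζ :=
    fun k _ ↦ differentiable_cutFactor E.ρ (F.x k) ζ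
  have hsum : logDeriv F.pullback ζ =
      ∑ k, logDeriv (cutFactor E.ρ (F.x k)) ζ + 2 * aeval ζ (derivative E.b) :=
    (logDeriv_mul (f := fun ζ ↦ ∏ k, cutFactor E.ρ (F.x k) ζ)
      (g := fun ζ ↦ exp (2 * aeval ζ E.b)) ζ (Finset.prod_ne_zero_iff.mpr fun k _ ↦ hne k)
      (exp_ne_zero _) (DifferentiableAt.fun_finsetProd hcut)
      (hb.const_mul 2).cexp.differentiableAt).trans
      (congrArg₂ (· + ·) (logDeriv_prod (fun k _ ↦ hne k) hcut) hexp)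
  have hfield := E.isEquilibriumPair.aeval_joukowski_of_norm_eq_one hζ
  rw [← cutMap, map_mul, aeval_cutMap_densityPoly n E.ρ hζ, aeval_C, coe_algebraMap,
    re_ofReal_mul, ofReal_re] at hfield
  have hre : (2 * (ζ * aeval ζ (derivative E.b))).re = 2 * (ζ * aeval ζ (derivative E.b)).re := by
    rw [← ofReal_ofNat 2, re_ofReal_mul]
  rw [hsum, mul_add, mul_left_comm ζ 2, add_re, Finset.mul_sum, re_sum,
    Finset.sum_congr rfl fun k _ ↦ re_mul_logDeriv_cutFactor_of_norm_eq_one hζ (hne k), hre]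
  simp only [Finset.sum_const, Finset.card_univ, Fintype.card_fin, nsmul_eq_mul, mul_one]
  linarith

/-- The function on the unit disc whose maximum principle bounds the solution from below off the
real axis. Its modulus decreases radially at the unit circle. -/
noncomputable def comparison (ζ : ℂ) : ℂ :=
  (ζ / edgeWeight E.ρ ζ) ^ (2 * n + 5) / F.pullback ζ

lemma differentiableAt_comparison (h1 : ‖ζ‖ ≤ 1) (hne : ∀ k, cutFactor E.ρ (F.x k) ζ ≠ 0) :
    DifferentiableAt ℂ F.comparison ζ := by
  have hA := edgeFactor_ne_zero (by linarith [E.ten_le_ρ] : 1 ≤ E.ρ) h1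
  exact ((differentiableAt_id.div (differentiableAt_edgeWeight hA) (edgeWeight_ne_zero hA)).pow
    _).div (F.differentiable_pullback ζ) (F.pullback_ne_zero hne)

lemma comparison_ne_zero (h0 : ζ ≠ 0) (h1 : ‖ζ‖ ≤ 1) (hne : ∀ k, cutFactor E.ρ (F.x k) ζ ≠ 0) :
    F.comparison ζ ≠ 0 := by
  have hA := edgeFactor_ne_zero (by linarith [E.ten_le_ρ] : 1 ≤ E.ρ) h1
  exact div_ne_zero (pow_ne_zero _ (div_ne_zero h0 (edgeWeight_ne_zero hA)))
    (F.pullback_ne_zero hne)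

lemma mul_logDeriv_comparison (h0 : ζ ≠ 0) (h1 : ‖ζ‖ ≤ 1)
    (hne : ∀ k, cutFactor E.ρ (F.x k) ζ ≠ 0) : ζ * logDeriv F.comparison ζ =
      (2 * n + 5 : ℝ) * (1 - ζ * logDeriv (edgeWeight E.ρ) ζ) - ζ * logDeriv F.pullback ζ := by
  have hA := edgeFactor_ne_zero (by linarith [E.ten_le_ρ] : 1 ≤ E.ρ) h1
  have hW := edgeWeight_ne_zero hA
  have hWd := differentiableAt_edgeWeight hA
  have hquot : DifferentiableAt ℂ (fun ζ ↦ ζ / edgeWeight E.ρ ζ) ζ := differentiableAt_id.div hWd hW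
  have hlog : logDeriv F.comparison ζ =
      (2 * n + 5 : ℕ) * (1 / ζ - logDeriv (edgeWeight E.ρ) ζ) - logDeriv F.pullback ζ := by
    rw [← logDeriv_id' ζ, ← logDeriv_div (f := fun ζ ↦ ζ) ζ h0 hW differentiableAt_id hWd,
      ← logDeriv_fun_pow hquot]
    exact logDeriv_div (f := fun ζ ↦ (ζ / edgeWeight E.ρ ζ) ^ (2 * n + 5)) ζ
      (pow_ne_zero _ (div_ne_zero h0 hW)) (F.pullback_ne_zero hne) (hquot.pow _)
      (F.differentiable_pullback ζ)
  rw [hlog]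
  push_cast
  field_simp

lemma re_mul_logDeriv_comparison_neg (hζ : ‖ζ‖ = 1) (hne : ∀ k, cutFactor E.ρ (F.x k) ζ ≠ 0) :
    (ζ * logDeriv F.comparison ζ).re < 0 := by
  have hκ := E.le_κ
  have ht := one_le_cutMap_re E.one_le_ρ_sq hζ
  rw [F.mul_logDeriv_comparison (norm_ne_zero_iff.mp (hζ ▸ one_ne_zero)) hζ.le hne, sub_re,
    re_ofReal_mul, sub_re, one_re, F.re_mul_logDeriv_pullback_of_norm_eq_one hζ hne]
  set t := E.ρ ^ 2 + (E.ρ ^ 2 - 1) * ζ.re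
  set s := (E.ρ ^ 2 - 1) ^ 2 * ζ.im ^ 2 with hs
  have : 0 ≤ s := by positivity
  have hweight := le_re_mul_logDeriv_edgeWeight E.ten_le_ρ hζ
  rw [← hs] at hweight
  have hfield : (2 * n + 5 : ℝ) * (s / E.ρ) ≤ E.κ / E.ρ * (t ^ n * s) := by
    calc (2 * n + 5 : ℝ) * (s / E.ρ) = (2 * n + 5) / E.ρ * (1 * s) := by ring
      _ ≤ E.κ / E.ρ * (t ^ n * s) := by
        gcongr
        exacts [(div_pos E.κ_pos E.ρ_pos).le, E.ρ_pos.le, one_le_pow₀ ht]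
  nlinarith [n.cast_nonneg (α := ℝ)]

end FeketeConfiguration

end Comparison

section LowerBound

open Filter Topology

variable {ρ : ℝ} {ζ z : ℂ}

lemma norm_one_add_cutMap_mul_le (hρ : 1 ≤ ρ) (h0 : ζ ≠ 0) (h1 : ‖ζ‖ ≤ 1) :
    ‖1 + cutMap ρ ζ‖ * ‖ζ‖ ≤ ‖edgeFactor ρ ζ‖ ^ 2 / 2 := by
  have hmul : 2 * ((1 + cutMap ρ ζ) * ζ) =
      edgeFactor ρ ζ * ((ρ + 1 : ℝ) * ζ + (ρ - 1 : ℝ)) := by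
    rw [← mul_assoc, ← edgeFactor_mul_edgeFactor_inv ρ h0, mul_assoc]
    congr 1
    rw [edgeFactor]
    field_simp
  have hle : ‖((ρ + 1 : ℝ) * ζ + (ρ - 1 : ℝ) : ℂ)‖ ≤ ‖edgeFactor ρ ζ‖ := by
    refine le_of_sq_le_sq ?_ (norm_nonneg _)
    have hsq : ζ.re * ζ.re + ζ.im * ζ.im ≤ 1 := by
      rw [← normSq_apply, normSq_eq_norm_sq]
      exact pow_le_one₀ (norm_nonneg ζ) h1
    rw [← normSq_eq_norm_sq, ← normSq_eq_norm_sq, normSq_apply, normSq_apply]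
    simp only [edgeFactor, add_re, add_im, mul_re, mul_im, ofReal_re, ofReal_im]
    nlinarith
  have hnorm := congrArg norm hmul
  rw [norm_mul, norm_mul, norm_mul, norm_ofNat] at hnorm
  nlinarith [norm_nonneg (edgeFactor ρ ζ)]

lemma one_le_norm_mul_norm_cutMap_add (hρ : 2 ≤ ρ) (h0 : ζ ≠ 0) (h1 : ‖ζ‖ ≤ 1) :
    1 ≤ ‖ζ‖ * (‖cutMap ρ ζ‖ + 4) := by
  set h := (ρ ^ 2 - 1) / 2 with hh
  have hpos : 3 / 2 ≤ h := by nlinarith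
  have hmul : (h : ℂ) = ζ * (cutMap ρ ζ - (2 * h + 1 : ℝ)) - h * ζ ^ 2 := by
    rw [cutMap, joukowski, ← hh, hh]
    push_cast
    field_simp
    ring
  have hnorm : h ≤ ‖ζ‖ * (‖cutMap ρ ζ‖ + (2 * h + 1)) + h * ‖ζ‖ ^ 2 := by
    calc h = ‖(h : ℂ)‖ := by rw [norm_real, Real.norm_of_nonneg (by linarith)]
      _ ≤ ‖ζ * (cutMap ρ ζ - (2 * h + 1 : ℝ))‖ + ‖h * ζ ^ 2‖ := by
        conv_lhs => rw [hmul]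
        exact norm_sub_le _ _
      _ ≤ _ := by
        rw [norm_mul, norm_mul, norm_pow, norm_real, Real.norm_of_nonneg (by linarith : 0 ≤ h)]
        gcongr
        exact (norm_sub_le _ _).trans_eq
          (by rw [norm_real, Real.norm_of_nonneg (by linarith : 0 ≤ 2 * h + 1)])
  have hζ := norm_pos_iff.mpr h0
  have hsq : h * ‖ζ‖ ^ 2 ≤ ‖ζ‖ * h := by
    nlinarith [mul_nonneg (mul_nonneg (by linarith : 0 ≤ h) hζ.le) (sub_nonneg.mpr h1)]
  have hle : ‖cutMap ρ ζ‖ + (3 * h + 1) ≤ h * (‖cutMap ρ ζ‖ + 4) := by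
    nlinarith [norm_nonneg (cutMap ρ ζ)]
  nlinarith [mul_le_mul_of_nonneg_left hle hζ.le]

lemma norm_one_add_cutMap_mul_le_norm_edgeWeight (hρ : 1 ≤ ρ) (h0 : ζ ≠ 0) (h1 : ‖ζ‖ ≤ 1) :
    ‖1 + cutMap ρ ζ‖ * ‖ζ‖ ≤ ‖edgeWeight ρ ζ‖ := by
  have hedge := two_le_norm_edgeFactor hρ h1
  have hexp : 1 ≤ Real.exp (2 * edgeRate ρ * (edgeMobius ρ ζ).re) := by
    have := edgeRate_nonneg hρ
    have := re_edgeMobius_nonneg hρ h1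
    exact Real.one_le_exp (by positivity)
  rw [norm_edgeWeight]
  calc ‖1 + cutMap ρ ζ‖ * ‖ζ‖ ≤ ‖edgeFactor ρ ζ‖ ^ 2 / 2 := norm_one_add_cutMap_mul_le hρ h0 h1
    _ ≤ (‖edgeFactor ρ ζ‖ ^ 2) ^ 2 * 1 := by
      have : 4 ≤ ‖edgeFactor ρ ζ‖ ^ 2 := by nlinarith
      nlinarith
    _ ≤ _ := by gcongr

lemma norm_edgeWeight_le (hρ : 10 ≤ ρ) (h0 : ζ ≠ 0) (h1 : ‖ζ‖ ≤ 1) :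
    ‖edgeWeight ρ ζ‖ ≤ (4 * (3 + ‖cutMap ρ ζ‖)) ^ 2 * Real.exp 8 := by
  have hρ1 : 1 ≤ ρ := by linarith
  have hexp : edgeRate ρ * (edgeMobius ρ ζ).re ≤ 4 := by
    have := edgeRate_nonneg hρ1
    calc edgeRate ρ * (edgeMobius ρ ζ).re ≤ edgeRate ρ * (ρ + 2) := by
          gcongr
          exact re_edgeMobius_le hρ1 h1
      _ ≤ 4 := by
        rw [edgeRate, div_mul_eq_mul_div, div_le_iff₀ (by positivity)]
        nlinarith
  rw [norm_edgeWeight]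
  gcongr
  · exact norm_edgeFactor_sq_le hρ1 h0 h1
  · linarith

namespace FeketeConfiguration

variable {n : ℕ} {E : EquilibriumField n} (F : FeketeConfiguration E) {θ : ℝ}

lemma norm_comparison_mul (h0 : ζ ≠ 0) (h1 : ‖ζ‖ ≤ 1) (hne : ∀ k, cutFactor E.ρ (F.x k) ζ ≠ 0) :
    ‖F.comparison ζ‖ * (‖F.solution (cutMap E.ρ ζ)‖ * Real.exp (-E.potential ζ) *
      ‖edgeWeight E.ρ ζ‖ ^ (2 * n + 5)) = ‖ζ‖ ^ (2 * n + 5) := by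
  have hW : ‖edgeWeight E.ρ ζ‖ ≠ 0 := norm_ne_zero_iff.mpr (edgeWeight_ne_zero
    (edgeFactor_ne_zero (by linarith [E.ten_le_ρ] : 1 ≤ E.ρ) h1))
  have hP := norm_ne_zero_iff.mpr (F.pullback_ne_zero hne)
  rw [← F.norm_pullback h0, comparison, norm_div, norm_pow, norm_div]
  field_simp
  rw [← mul_pow, div_mul_cancel₀ _ hW]

lemma potential_le_one_near (hθ : 0 < θ) (hθ1 : θ ≤ 1) (h0 : ζ ≠ 0) (h1 : ‖ζ‖ ≤ 1) {k : Fin E.N}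
    (hk : ‖cutMap E.ρ ζ - F.x k‖ = E.zeroRadius θ (F.x k)) : E.potential ζ ≤ 1 := by
  have hx : 0 ≤ F.x k := F.x_nonneg k
  have hr := E.zeroRadius_le hθ hx
  obtain ⟨ζ', h0', h1', hζ'⟩ := E.exists_cutMap_eq (F.x k)
  have hz : ‖cutMap E.ρ ζ‖ ≤ F.x k + 1 := by
    have := norm_le_norm_add_norm_sub' (cutMap E.ρ ζ) (F.x k)
    rw [norm_real, Real.norm_of_nonneg hx] at this
    linarith
  have hlip := E.abs_potential_sub_le h0 h0' h1 h1' (by linarith) hz hζ'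
    (by rw [abs_of_nonneg hx]; linarith)
  have hneg := E.potential_nonpos h0' h1' hx hζ'
  have hsmall : E.κ * (F.x k + 1 + 2) ^ (n + 1) * E.zeroRadius θ (F.x k) ≤ 1 := by
    have hκ := E.one_le_κ
    have := (E.zeroRadius_pos hθ hx).le
    have hκ36 : E.κ ≤ 36 * E.κ ^ 2 := by nlinarith
    have hpow : (F.x k + 1 + 2) ^ (n + 1) ≤ (F.x k + 4) ^ (n + 1) :=
      pow_le_pow_left₀ (by linarith) (by linarith) _
    calc E.κ * (F.x k + 1 + 2) ^ (n + 1) * E.zeroRadius θ (F.x k)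
        ≤ 36 * E.κ ^ 2 * (F.x k + 4) ^ (n + 1) * E.zeroRadius θ (F.x k) := by gcongr
      _ = E.zeroRadius θ (F.x k) * (36 * E.κ ^ 2 * (F.x k + 4) ^ (n + 1)) := mul_comm _ _
      _ ≤ 1 := (E.zeroRadius_mul_pow_le hθ hx (by lia)).trans hθ1
  rw [hk] at hlip
  linarith [le_abs_self (E.potential ζ - E.potential ζ')]

lemma norm_comparison_le_near (hθ : 0 < θ) (hθ1 : θ ≤ 1) (h0 : ζ ≠ 0) (h1 : ‖ζ‖ ≤ 1)
    (hne : ∀ k, cutFactor E.ρ (F.x k) ζ ≠ 0) {k : Fin E.N}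
    (hk : ‖cutMap E.ρ ζ - F.x k‖ = E.zeroRadius θ (F.x k)) :
    ‖F.comparison ζ‖ * (θ * F.M / (72 * E.κ ^ 2 * 8 ^ (2 * n + 5))) ≤ 3 := by
  have hlow := F.le_norm_solution_mul_pow k hθ hθ1 hk
  have hexp : 1 ≤ 3 * Real.exp (-E.potential ζ) := by
    have h3 : Real.exp (E.potential ζ) ≤ 3 :=
      (Real.exp_le_exp.mpr (F.potential_le_one_near hθ hθ1 h0 h1 hk)).trans
        (by linarith [Real.exp_one_lt_d9])
    rw [Real.exp_neg, ← div_eq_mul_inv]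
    exact (one_le_div (Real.exp_pos _)).mpr h3
  have hpow := pow_le_pow_left₀ (by positivity) (norm_one_add_cutMap_mul_le_norm_edgeWeight
    (ρ := E.ρ) (by linarith [E.ten_le_ρ]) h0 h1) (2 * n + 5)
  rw [mul_pow] at hpow
  have hcomp := F.norm_comparison_mul h0 h1 hne
  have hζ : 0 < ‖ζ‖ ^ (2 * n + 5) := pow_pos (norm_pos_iff.mpr h0) _
  set w := ‖F.solution (cutMap E.ρ ζ)‖
  refine le_of_mul_le_mul_right ?_ hζ
  calc ‖F.comparison ζ‖ * (θ * F.M / (72 * E.κ ^ 2 * 8 ^ (2 * n + 5))) * ‖ζ‖ ^ (2 * n + 5)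
      ≤ ‖F.comparison ζ‖ * (w * ‖1 + cutMap E.ρ ζ‖ ^ (2 * n + 5)) * ‖ζ‖ ^ (2 * n + 5) := by
        gcongr
    _ = ‖F.comparison ζ‖ * (w * 1 * (‖1 + cutMap E.ρ ζ‖ ^ (2 * n + 5) * ‖ζ‖ ^ (2 * n + 5))) := by
        ring
    _ ≤ ‖F.comparison ζ‖ * (w * (3 * Real.exp (-E.potential ζ)) *
          ‖edgeWeight E.ρ ζ‖ ^ (2 * n + 5)) := by gcongr
    _ = 3 * ‖ζ‖ ^ (2 * n + 5) := by
        rw [← hcomp]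
        ring

/-- The part of the unit disc lying over the complement of the discs of radius
`E.zeroRadius θ (F.x k)` about the zeros `F.x k`. The defining inequalities are multiplied by `‖ζ‖`,
which makes sense of them at `ζ = 0`. -/
def awayFromZeros (θ : ℝ) : Set ℂ :=
  {ζ | ‖ζ‖ < 1 ∧ ∀ k, E.zeroRadius θ (F.x k) * ‖ζ‖ < ‖cutFactor E.ρ (F.x k) ζ‖}

lemma isOpen_setOf_lt_norm_cutFactor (r ρ x : ℝ) : IsOpen {ζ | r * ‖ζ‖ < ‖cutFactor ρ x ζ‖} :=
  isOpen_lt (continuous_const.mul continuous_norm) (differentiable_cutFactor ρ x).continuous.norm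

lemma isOpen_awayFromZeros (θ : ℝ) : IsOpen (F.awayFromZeros θ) := by
  rw [awayFromZeros, Set.ofPred_and, Set.ofPred_forall]
  exact (isOpen_lt continuous_norm continuous_const).inter
    (isOpen_iInter_of_finite fun k ↦ isOpen_setOf_lt_norm_cutFactor _ _ _)

lemma isBounded_awayFromZeros (θ : ℝ) : Bornology.IsBounded (F.awayFromZeros θ) :=
  Metric.isBounded_ball.subset fun _ hζ ↦ mem_ball_zero_iff.mpr hζ.1

lemma closure_awayFromZeros_subset (θ : ℝ) : closure (F.awayFromZeros θ) ⊆
    {ζ | ‖ζ‖ ≤ 1 ∧ ∀ k, E.zeroRadius θ (F.x k) * ‖ζ‖ ≤ ‖cutFactor E.ρ (F.x k) ζ‖} := by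
  refine closure_minimal (fun ζ hζ ↦ ⟨hζ.1.le, fun k ↦ (hζ.2 k).le⟩) ?_
  rw [Set.ofPred_and, Set.ofPred_forall]
  exact (isClosed_le continuous_norm continuous_const).inter (isClosed_iInter fun k ↦
    isClosed_le (continuous_const.mul continuous_norm)
      (differentiable_cutFactor E.ρ (F.x k)).continuous.norm)

lemma cutFactor_zero_ne_zero (k : Fin E.N) : cutFactor E.ρ (F.x k) 0 ≠ 0 := by
  have hρ : (E.ρ ^ 2 - 1) / 2 ≠ 0 := by nlinarith [E.ten_le_ρ]
  simpa [cutFactor] using ofReal_ne_zero.mpr hρ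

lemma cutFactor_ne_zero_of_mem_closure (hθ : 0 < θ) (hζ : ζ ∈ closure (F.awayFromZeros θ))
    (k : Fin E.N) : cutFactor E.ρ (F.x k) ζ ≠ 0 := by
  intro h
  have hle := (F.closure_awayFromZeros_subset θ hζ).2 k
  have hr := E.zeroRadius_pos hθ (F.x_nonneg k)
  rw [h, norm_zero] at hle
  have hζ0 : ζ = 0 := norm_le_zero_iff.mp (nonpos_of_mul_nonpos_right hle hr)
  exact F.cutFactor_zero_ne_zero k (hζ0 ▸ h)

lemma exists_norm_comparison_lt (hζ : ‖ζ‖ = 1)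
    (hk : ∀ k, E.zeroRadius θ (F.x k) * ‖ζ‖ < ‖cutFactor E.ρ (F.x k) ζ‖)
    (hne : ∀ k, cutFactor E.ρ (F.x k) ζ ≠ 0) :
    ∃ ζ' ∈ F.awayFromZeros θ, ‖F.comparison ζ‖ < ‖F.comparison ζ'‖ := by
  have htend : Tendsto (fun s : ℝ ↦ (s : ℂ) * ζ) (𝓝[<] 1) (𝓝 ζ) := by
    have hcont : Continuous fun s : ℝ ↦ (s : ℂ) * ζ := by fun_prop
    simpa using (hcont.tendsto 1).mono_left nhdsWithin_le_nhds
  have haway : ∀ᶠ s : ℝ in 𝓝[<] 1, ∀ k,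
      E.zeroRadius θ (F.x k) * ‖(s : ℂ) * ζ‖ < ‖cutFactor E.ρ (F.x k) (s * ζ)‖ :=
    eventually_all.mpr fun k ↦
      htend.eventually ((isOpen_setOf_lt_norm_cutFactor _ _ _).mem_nhds (hk k))
  have hgrow := eventually_norm_lt_of_re_mul_logDeriv_neg (F.differentiableAt_comparison hζ.le hne)
    (F.comparison_ne_zero (norm_ne_zero_iff.mp (by simp [hζ])) hζ.le hne)
    (F.re_mul_logDeriv_comparison_neg hζ hne)
  have hpos : ∀ᶠ s : ℝ in 𝓝[<] 1, 0 < s := nhdsWithin_le_nhds (lt_mem_nhds one_pos)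
  obtain ⟨s, ⟨⟨hs, hlt⟩, hs0⟩, hs1⟩ := (((haway.and hgrow).and hpos).and self_mem_nhdsWithin).exists
  refine ⟨s * ζ, ⟨?_, hs⟩, hlt⟩
  rwa [norm_mul, hζ, mul_one, norm_real, Real.norm_of_nonneg hs0.le]

lemma norm_comparison_mul_le (hθ : 0 < θ) (hθ1 : θ ≤ 1) (hζ : ζ ∈ F.awayFromZeros θ) :
    ‖F.comparison ζ‖ * (θ * F.M / (72 * E.κ ^ 2 * 8 ^ (2 * n + 5))) ≤ 3 := by
  have hM := F.M_pos
  have hκ := E.κ_pos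
  rw [← le_div_iff₀ (by positivity)]
  refine norm_le_of_forall_frontier_exists_norm_lt (F.isBounded_awayFromZeros θ)
    (DifferentiableOn.diffContOnCl fun ζ hζ ↦ (F.differentiableAt_comparison
      (F.closure_awayFromZeros_subset θ hζ).1
      (F.cutFactor_ne_zero_of_mem_closure hθ hζ)).differentiableWithinAt) (fun ζ hζ ↦ ?_) hζ
  rw [(F.isOpen_awayFromZeros θ).frontier_eq] at hζ
  have hne := F.cutFactor_ne_zero_of_mem_closure hθ hζ.1
  obtain ⟨h1, hle⟩ := F.closure_awayFromZeros_subset θ hζ.1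
  by_cases hstrict : ∀ k, E.zeroRadius θ (F.x k) * ‖ζ‖ < ‖cutFactor E.ρ (F.x k) ζ‖
  · have h1' : ‖ζ‖ = 1 := h1.eq_of_not_lt fun hlt ↦ hζ.2 ⟨hlt, hstrict⟩
    exact Or.inr (F.exists_norm_comparison_lt h1' hstrict hne)
  · push Not at hstrict
    obtain ⟨k, hk⟩ := hstrict
    have heq := hk.antisymm (hle k)
    have h0 : ζ ≠ 0 := by
      rintro rfl
      rw [norm_zero, mul_zero, norm_eq_zero] at heq
      exact F.cutFactor_zero_ne_zero k heq
    rw [cutFactor_eq _ _ h0, norm_mul, mul_comm] at heq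
    rw [le_div_iff₀ (by positivity)]
    exact Or.inl (F.norm_comparison_le_near hθ hθ1 h0 h1 hne
      (mul_right_cancel₀ (norm_ne_zero_iff.mpr h0) heq))

lemma neg_potential_le (h0 : ζ ≠ 0) (h1 : ‖ζ‖ ≤ 1) : -E.potential ζ ≤
    E.κ * (‖cutMap E.ρ ζ‖ + 3) ^ (n + 1) * (‖cutMap E.ρ ζ‖ + 2) := by
  have hcut : cutMap E.ρ (-1) = (1 : ℝ) := by
    rw [cutMap, joukowski]
    push_cast
    ring
  have hlip := E.abs_potential_sub_le h0 (neg_ne_zero.mpr one_ne_zero) h1 (by simp)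
    (K := ‖cutMap E.ρ ζ‖ + 1) (by positivity) (by linarith) hcut (by simp)
  have hκ := E.κ_pos
  rw [E.potential_of_norm_eq_one (ζ := -1) (by simp), sub_zero] at hlip
  refine (neg_le_abs _).trans (hlip.trans ?_)
  have hadd : ‖cutMap E.ρ ζ‖ + 1 + 2 = ‖cutMap E.ρ ζ‖ + 3 := by ring
  rw [hadd]
  gcongr
  exact (norm_sub_le _ _).trans (by norm_num)

lemma le_norm_solution (hθ : 0 < θ) (hθ1 : θ ≤ 1) (hz : θ ≤ |z.im|) :
    θ * F.M / (72 * E.κ ^ 2 * 8 ^ (2 * n + 5)) ≤ ‖F.solution z‖ *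
      (3 * (‖z‖ + 4) ^ (2 * n + 5) * Real.exp (E.κ * (‖z‖ + 3) ^ (n + 1) * (‖z‖ + 2)) *
        ((4 * (3 + ‖z‖)) ^ 2 * Real.exp 8) ^ (2 * n + 5)) := by
  obtain ⟨ζ, h0, h1, rfl⟩ := E.exists_cutMap_eq z
  have hlt : ‖ζ‖ < 1 := by
    refine lt_of_le_of_ne h1 fun h ↦ ?_
    rw [cutMap_of_norm_eq_one _ h, ofReal_im, abs_zero] at hz
    exact hθ.not_ge hz
  have hdist : ∀ k, E.zeroRadius θ (F.x k) < ‖cutMap E.ρ ζ - F.x k‖ := fun k ↦ by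
    have him := abs_im_le_norm (cutMap E.ρ ζ - F.x k)
    rw [sub_im, ofReal_im, sub_zero] at him
    linarith [E.zeroRadius_le hθ (F.x_nonneg k)]
  have hmem : ζ ∈ F.awayFromZeros θ := ⟨hlt, fun k ↦ by
    rw [cutFactor_eq _ _ h0, norm_mul, mul_comm]
    exact mul_lt_mul_of_pos_left (hdist k) (norm_pos_iff.mpr h0)⟩
  have hcomp := F.norm_comparison_mul_le hθ hθ1 hmem
  have hmul := F.norm_comparison_mul h0 h1
    (F.cutFactor_ne_zero_of_mem_closure hθ (subset_closure hmem))
  have hone := one_le_pow₀ (n := 2 * n + 5)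
    (one_le_norm_mul_norm_cutMap_add (by linarith [E.ten_le_ρ] : 2 ≤ E.ρ) h0 h1)
  rw [mul_pow] at hone
  have hW := norm_edgeWeight_le E.ten_le_ρ h0 h1
  have hpot := neg_potential_le (E := E) h0 h1
  have hM := F.M_pos
  have hκ := E.κ_pos
  set c := θ * F.M / (72 * E.κ ^ 2 * 8 ^ (2 * n + 5))
  set w := ‖F.solution (cutMap E.ρ ζ)‖
  set r := ‖cutMap E.ρ ζ‖
  calc c = 1 * c := (one_mul c).symm
    _ ≤ ‖ζ‖ ^ (2 * n + 5) * (r + 4) ^ (2 * n + 5) * c := by gcongr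
    _ = ‖F.comparison ζ‖ * c * (w * Real.exp (-E.potential ζ) *
          ‖edgeWeight E.ρ ζ‖ ^ (2 * n + 5)) * (r + 4) ^ (2 * n + 5) := by
      rw [← hmul]
      ring
    _ ≤ 3 * (w * Real.exp (E.κ * (r + 3) ^ (n + 1) * (r + 2)) *
          ((4 * (3 + r)) ^ 2 * Real.exp 8) ^ (2 * n + 5)) * (r + 4) ^ (2 * n + 5) := by gcongr
    _ = _ := by ring

end FeketeConfiguration

end LowerBound

section HeineStieltjes

open Filter Finset Topology

lemma coeff_mul_add_one {R : Type*} [Semiring R] {p q : R[X]} {m n : ℕ}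
    (hp : p.natDegree ≤ m + 1) (hq : q.natDegree ≤ n + 1) :
    (p * q).coeff (m + n + 1) = p.coeff (m + 1) * q.coeff n + p.coeff m * q.coeff (n + 1) := by
  rw [coeff_mul]
  refine sum_eq_add (m + 1, n) (m, n + 1) (by simp) (fun ij hij hne ↦ ?_)
    (fun h ↦ (h (HasAntidiagonal.mem_antidiagonal.mpr (by lia))).elim)
    (fun h ↦ (h (HasAntidiagonal.mem_antidiagonal.mpr (by lia))).elim)
  obtain ⟨i, j⟩ := ij
  have hsum : i + j = m + n + 1 := HasAntidiagonal.mem_antidiagonal.mp hij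
  rw [ne_eq, ne_eq, Prod.mk.injEq, Prod.mk.injEq] at hne
  rcases lt_or_ge (m + 1) i with hi | hi
  · rw [coeff_eq_zero_of_natDegree_lt (hp.trans_lt hi), zero_mul]
  · rw [coeff_eq_zero_of_natDegree_lt (p := q) (hq.trans_lt (by lia)), mul_zero]

lemma nodal_dvd_of_forall_critical {K ι : Type*} [Field K] [DecidableEq ι] {s : Finset ι}
    {x : ι → K} (hx : Set.InjOn x s) {q : K[X]}
    (hq : ∀ k ∈ s, q.eval (x k) * (Lagrange.nodal (s.erase k) x).eval (x k) +
      (derivative (Lagrange.nodal (s.erase k) x)).eval (x k) = 0) :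
    Lagrange.nodal s x ∣
      derivative (derivative (Lagrange.nodal s x)) + 2 * q * derivative (Lagrange.nodal s x) := by
  refine prod_dvd_of_coprime (fun i hi j hj hij ↦ ?_) fun k hk ↦ ?_
  · exact pairwise_coprime_X_sub_C Function.injective_id (hx.ne hi hj hij)
  · rw [dvd_iff_isRoot, IsRoot.def, Lagrange.nodal_eq_mul_nodal_erase hk]
    simp only [derivative_mul, derivative_sub, derivative_X, derivative_C, derivative_add, eval_add,
      eval_mul, eval_sub, eval_X, eval_C, eval_ofNat, sub_zero, one_mul, sub_self, zero_mul]
    linear_combination 2 * hq k hk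

lemma hasDerivAt_exp_aeval_mul_aeval (Q p : ℝ[X]) (z : ℂ) :
    HasDerivAt (fun z : ℂ ↦ exp (aeval z Q) * aeval z p)
      (exp (aeval z Q) * aeval z (derivative Q * p + derivative p)) z := by
  rw [map_add, map_mul, mul_add, ← mul_assoc]
  exact (Q.hasDerivAt_aeval z).cexp.mul (p.hasDerivAt_aeval z)

lemma iteratedDeriv_two_exp_aeval_mul_aeval (Q p : ℝ[X]) (z : ℂ) :
    iteratedDeriv 2 (fun z : ℂ ↦ exp (aeval z Q) * aeval z p) z =
      exp (aeval z Q) * aeval z (derivative (derivative p) + 2 * derivative Q * derivative p +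
        (derivative (derivative Q) + derivative Q ^ 2) * p) := by
  rw [iteratedDeriv_succ, iteratedDeriv_one,
    funext fun z ↦ (hasDerivAt_exp_aeval_mul_aeval Q p z).deriv,
    (hasDerivAt_exp_aeval_mul_aeval Q _ z).deriv]
  congr 2
  simp only [derivative_add, derivative_mul]
  ring

lemma exists_ode_of_forall_critical {ι : Type*} [DecidableEq ι] {s : Finset ι} (hs : s.Nonempty)
    {x : ι → ℝ} (hx : Set.InjOn x s) {Q : ℝ[X]} {n : ℕ} (hQ : Q.natDegree ≤ n + 2)
    (hcrit : ∀ k ∈ s, (derivative Q).eval (x k) * (Lagrange.nodal (s.erase k) x).eval (x k) +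
      (derivative (Lagrange.nodal (s.erase k) x)).eval (x k) = 0) :
    ∃ S : ℝ[X], S.natDegree ≤ n ∧ ∀ z, iteratedDeriv 2 (weightedNodal Q s x) z =
      aeval z (S + derivative (derivative Q) + derivative Q ^ 2) * weightedNodal Q s x z := by
  obtain ⟨S, hS⟩ := nodal_dvd_of_forall_critical hx hcrit
  have hmonic : (Lagrange.nodal s x).Monic := Lagrange.nodal_monic
  set p := Lagrange.nodal s x with hp
  have hp' : (derivative p).natDegree ≤ #s - 1 :=
    (natDegree_derivative_le p).trans_eq (by rw [hp, Lagrange.natDegree_nodal])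
  have hdeg : (p * S).natDegree ≤ n + #s := by
    have hcard := hs.card_pos
    have h2Q : (2 * derivative Q).natDegree ≤ n + 1 :=
      (natDegree_C_mul_le 2 _).trans ((natDegree_derivative_le Q).trans (by lia))
    rw [← hS]
    refine (natDegree_add_le _ _).trans (max_le ?_ ?_)
    · exact (natDegree_derivative_le _).trans (by lia)
    · exact natDegree_mul_le.trans (by lia)
  refine ⟨S, ?_, fun z ↦ ?_⟩
  · rcases eq_or_ne S 0 with rfl | hS0
    · exact (natDegree_zero (R := ℝ)).trans_le n.zero_le
    · rw [hmonic.natDegree_mul' hS0, hp, Lagrange.natDegree_nodal] at hdeg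
      lia
  · refine (iteratedDeriv_two_exp_aeval_mul_aeval Q p z).trans ?_
    rw [hS, weightedNodal]
    simp only [map_add, map_mul, ← hp]
    ring

namespace FeketeConfiguration

variable {n : ℕ} {E : EquilibriumField n} (F : FeketeConfiguration E)

lemma critical {k : Fin E.N} (hk : 0 < F.x k) :
    (derivative E.Q).eval (F.x k) * (Lagrange.nodal (univ.erase k) F.x).eval (F.x k) +
      (derivative (Lagrange.nodal (univ.erase k) F.x)).eval (F.x k) = 0 := by
  set p := Lagrange.nodal (univ.erase k) F.x
  have hmax : IsLocalMax (fun t ↦ (Real.exp (E.Q.eval t) * p.eval t) ^ 2) (F.x k) := by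
    filter_upwards [lt_mem_nhds hk] with t ht
    have hle := F.norm_erase_le k t ht.le
    rwa [weightedNodal_ofReal, weightedNodal_ofReal, norm_real, norm_real, Real.norm_eq_abs,
      Real.norm_eq_abs, ← sq_le_sq] at hle
  have hderiv := hmax.hasDerivAt_eq_zero
    (((E.Q.hasDerivAt (F.x k)).exp.fun_mul (p.hasDerivAt (F.x k))).fun_pow 2)
  have hne : p.eval (F.x k) ≠ 0 := Lagrange.eval_nodal_not_at_node fun j hj h ↦
    ne_of_mem_erase hj (F.x_injective h).symm
  have := Real.exp_ne_zero (E.Q.eval (F.x k))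
  have hfactor : 2 * Real.exp (E.Q.eval (F.x k)) ^ 2 * p.eval (F.x k) ≠ 0 := by positivity
  refine (mul_eq_zero.mp ?_).resolve_left hfactor
  rw [← hderiv]
  push_cast
  ring

lemma exists_ode (hpos : ∀ k, 0 < F.x k) :
    ∃ P : ℝ[X], P.natDegree ≤ 2 * n + 2 ∧ P.coeff (2 * n + 2) = -(E.κ / E.ρ) ^ 2 ∧
      P.coeff (2 * n + 1) = 2 * E.κ ^ 2 ∧
      ∀ z, iteratedDeriv 2 F.solution z + aeval z P * F.solution z = 0 := by
  have : Nonempty (Fin E.N) := Fin.pos_iff_nonempty.mp E.N_pos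
  obtain ⟨S, hS, hode⟩ := exists_ode_of_forall_critical univ_nonempty F.x_injective.injOn
    E.natDegree_Q_le fun k _ ↦ F.critical (hpos k)
  have hQ' : (derivative E.Q).natDegree ≤ n + 1 :=
    (natDegree_derivative_le _).trans (Nat.sub_le_of_le_add E.natDegree_Q_le)
  have hlow : (S + derivative (derivative E.Q)).natDegree ≤ n :=
    (natDegree_add_le _ _).trans
      (max_le hS ((natDegree_derivative_le _).trans (Nat.sub_le_of_le_add hQ')))
  have htop : (derivative E.Q).coeff (n + 1) = -(E.κ / E.ρ) := by
    rw [coeff_derivative, ← E.coeff_Q_top]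
    push_cast
    ring
  have hsub : (derivative E.Q).coeff n = E.κ * E.ρ := by rw [coeff_derivative, E.coeff_Q_sub]
  refine ⟨-(S + derivative (derivative E.Q) + derivative E.Q ^ 2), ?_, ?_, ?_, fun z ↦ ?_⟩
  · rw [natDegree_neg]
    exact (natDegree_add_le _ _).trans (max_le (by lia) (natDegree_pow_le.trans (by lia)))
  · rw [coeff_neg, coeff_add, coeff_eq_zero_of_natDegree_lt (hlow.trans_lt (by lia)), zero_add,
      ← mul_add_one, coeff_pow_of_natDegree_le hQ', htop, neg_sq]
  · rw [coeff_neg, coeff_add, coeff_eq_zero_of_natDegree_lt (hlow.trans_lt (by lia)), zero_add,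
      sq, two_mul, coeff_mul_add_one hQ' hQ', htop, hsub]
    have := E.ρ_pos.ne'
    field_simp
    ring
  · rw [solution, hode, map_neg]
    ring

end FeketeConfiguration

end HeineStieltjes

section NormalFamilies

open Filter Topology

variable {ι : Type*} {W : ι → ℂ → ℂ}

lemma equicontinuous_of_forall_exists_norm_le (hW : ∀ j, Differentiable ℂ (W j))
    (hbdd : ∀ r, ∃ C, ∀ j z, ‖z‖ ≤ r → ‖W j z‖ ≤ C) : Equicontinuous W := by
  intro z₀
  obtain ⟨C, hC⟩ := hbdd (‖z₀‖ + 1)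
  refine Metric.equicontinuousAt_of_continuity_modulus (fun z ↦ 2 * C / 1 * dist z z₀) ?_ W ?_
  · have hcont : Continuous fun z ↦ 2 * C / 1 * dist z z₀ := by fun_prop
    simpa using hcont.tendsto z₀
  · filter_upwards [Metric.ball_mem_nhds z₀ one_pos] with z hz j
    rw [dist_comm]
    refine dist_le_div_mul_dist_of_mapsTo_ball (hW j).differentiableOn (fun y hy ↦ ?_) hz
    have hy : ‖y‖ ≤ ‖z₀‖ + 1 := by
      have hdist := mem_ball_iff_norm.mp hy
      linarith [norm_le_norm_add_norm_sub' y z₀]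
    rw [mem_closedBall_iff_norm]
    linarith [norm_sub_le (W j y) (W j z₀), hC j y hy, hC j z₀ (by linarith)]

/-- Montel's theorem, in the form of convergence along an ultrafilter. -/
lemma exists_tendstoLocallyUniformlyOn_ultrafilter (F : Ultrafilter ι)
    (hW : ∀ j, Differentiable ℂ (W j)) (hbdd : ∀ r, ∃ C, ∀ j z, ‖z‖ ≤ r → ‖W j z‖ ≤ C) :
    ∃ w, TendstoLocallyUniformlyOn W w F Set.univ := by
  have hlim : ∀ z, ∃ y, Tendsto (fun j ↦ W j z) F (𝓝 y) := fun z ↦ by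
    obtain ⟨C, hC⟩ := hbdd ‖z‖
    obtain ⟨y, -, hy⟩ := (isCompact_closedBall (0 : ℂ) C).ultrafilter_le_nhds'
      (F.map fun j ↦ W j z)
      (Ultrafilter.mem_map.mpr (univ_mem' fun j ↦ mem_closedBall_zero_iff.mpr (hC j z le_rfl)))
    exact ⟨y, hy⟩
  choose w hw using hlim
  refine ⟨w, ?_⟩
  rw [tendstoLocallyUniformlyOn_iff_forall_isCompact isOpen_univ]
  intro K _ hK
  have hunif := (EquicontinuousOn.tendsto_uniformOnFun_iff_pi (𝔖 := {K : Set ℂ | IsCompact K})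
    (F := W) (fun K hK ↦ hK) (Set.eq_univ_of_forall fun z ↦ ⟨{z}, isCompact_singleton, rfl⟩)
    (fun K _ ↦ (equicontinuous_of_forall_exists_norm_le hW hbdd).equicontinuousOn K)
    (F : Filter ι) w).mpr (tendsto_pi_nhds.mpr hw)
  exact UniformOnFun.tendsto_iff_tendstoUniformlyOn.mp hunif K hK

lemma tendsto_iteratedDeriv_two {l : Filter ι} {w : ℂ → ℂ} (hW : ∀ j, Differentiable ℂ (W j))
    (hw : TendstoLocallyUniformlyOn W w l Set.univ) (z : ℂ) :
    Tendsto (fun j ↦ iteratedDeriv 2 (W j) z) l (𝓝 (iteratedDeriv 2 w z)) := by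
  have hderiv := (hw.deriv (.of_forall fun j ↦ (hW j).differentiableOn) isOpen_univ).deriv
    (.of_forall fun j ↦ (hW j).deriv.differentiableOn) isOpen_univ
  simpa only [iteratedDeriv_succ, iteratedDeriv_zero, Function.comp_apply]
    using hderiv.tendsto_at (Set.mem_univ z)

end NormalFamilies

section PolynomialLimits

open Filter Topology

variable {ι : Type*} {l : Filter ι} {m : ℕ}

lemma tendsto_coeff_of_tendsto_eval {K σ : Type*} [Field K] [TopologicalSpace K]
    [IsTopologicalSemiring K] [DecidableEq σ] {s : Finset σ} {v y : σ → K} (hv : Set.InjOn v s)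
    {P : ι → K[X]} (hdeg : ∀ j, (P j).degree < s.card)
    (hP : ∀ i ∈ s, Tendsto (fun j ↦ (P j).eval (v i)) l (𝓝 (y i))) (k : ℕ) :
    Tendsto (fun j ↦ (P j).coeff k) l (𝓝 ((Lagrange.interpolate s v y).coeff k)) := by
  have hcoeff : ∀ y : σ → K, (Lagrange.interpolate s v y).coeff k =
      ∑ i ∈ s, y i * (Lagrange.basis s v i).coeff k := fun y ↦ by
    simp only [Lagrange.interpolate_apply, finsetSum_coeff, coeff_C_mul]
  have hinterp : ∀ j, (P j).coeff k =
      ∑ i ∈ s, (P j).eval (v i) * (Lagrange.basis s v i).coeff k := fun j ↦ by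
    rw [← hcoeff, ← Lagrange.eq_interpolate hv (hdeg j)]
  simp only [hcoeff, hinterp]
  exact tendsto_finsetSum _ fun i hi ↦ (hP i hi).mul_const _

lemma exists_tendsto_coeff {P : ι → ℝ[X]} (hdeg : ∀ j, (P j).natDegree ≤ m)
    (hP : ∀ z : ℂ, z.im ≠ 0 → ∃ y, Tendsto (fun j ↦ aeval z (P j)) l (𝓝 y)) :
    ∃ R : ℝ[X], R.natDegree ≤ m ∧ ∀ k, Tendsto (fun j ↦ (P j).coeff k) l (𝓝 (R.coeff k)) := by
  choose! y hy using hP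
  let v : ℕ → ℂ := fun i ↦ i + I
  have hv : Set.InjOn v (Finset.range (m + 1)) := fun i _ j _ hij ↦ by simpa [v] using hij
  have hcoeff := fun k ↦ (continuous_re.tendsto _).comp <| tendsto_coeff_of_tendsto_eval
    (P := fun j ↦ (P j).map (algebraMap ℝ ℂ)) (y := fun i ↦ y (v i)) hv (fun j ↦ by
      rw [Finset.card_range, degree_map]
      exact degree_le_natDegree.trans_lt (mod_cast Nat.lt_succ_of_le (hdeg j)))
    (fun i _ ↦ by simpa only [eval_map_algebraMap] using hy (v i) (by simp [v])) k
  simp only [Function.comp_def, coeff_map, coe_algebraMap, ofReal_re] at hcoeff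
  set c : ℕ → ℝ := fun k ↦ ((Lagrange.interpolate (Finset.range (m + 1)) v
    fun i ↦ y (v i)).coeff k).re
  refine ⟨∑ k ∈ Finset.range (m + 1), C (c k) * X ^ k, ?_, fun k ↦ ?_⟩
  · exact natDegree_sum_le_of_forall_le _ _ fun k hk ↦
      (natDegree_C_mul_X_pow_le _ _).trans (Nat.le_of_lt_succ (Finset.mem_range.mp hk))
  · simp only [finsetSum_coeff, coeff_C_mul_X_pow, Finset.sum_ite_eq, Finset.mem_range]
    split_ifs with hk
    · exact hcoeff k
    · refine tendsto_const_nhds.congr fun j ↦ (coeff_eq_zero_of_natDegree_lt ?_).symm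
      exact (hdeg j).trans_lt (by lia)

lemma tendsto_aeval_of_tendsto_coeff {R A : Type*} [CommSemiring R] [Semiring A] [Algebra R A]
    [TopologicalSpace R] [TopologicalSpace A] [ContinuousAdd A] [ContinuousSMul R A] {P : ι → R[X]}
    {Q : R[X]} (hP : ∀ j, (P j).natDegree ≤ m) (hQ : Q.natDegree ≤ m)
    (h : ∀ k, Tendsto (fun j ↦ (P j).coeff k) l (𝓝 (Q.coeff k))) (a : A) :
    Tendsto (fun j ↦ aeval a (P j)) l (𝓝 (aeval a Q)) := by
  simp only [aeval_eq_sum_range' (Nat.lt_succ_of_le (hP _)),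
    aeval_eq_sum_range' (Nat.lt_succ_of_le hQ)]
  exact tendsto_finsetSum _ fun k _ ↦ (h k).smul_const _

end PolynomialLimits

section RealRootedSolutions

open Filter Topology

/-- `w` is a nonzero entire solution of `w'' + P w = 0` with only real zeros. -/
structure IsRealRootedSolution (P : ℝ[X]) (w : ℂ → ℂ) : Prop where
  differentiable : Differentiable ℂ w
  ne_zero : w ≠ 0
  ode : ∀ z, iteratedDeriv 2 w z + aeval z P * w z = 0
  im_eq_zero : ∀ z, w z = 0 → z.im = 0

variable {ι : Type*} {m : ℕ} {W : ι → ℂ → ℂ} {P : ι → ℝ[X]}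

lemma exists_isRealRootedSolution_tendsto (F : Ultrafilter ι) (hW : ∀ j, Differentiable ℂ (W j))
    (hbdd : ∀ r, ∃ C, ∀ j z, ‖z‖ ≤ r → ‖W j z‖ ≤ C)
    (hlow : ∀ z : ℂ, z.im ≠ 0 → ∃ c > 0, ∀ j, c ≤ ‖W j z‖) (hdeg : ∀ j, (P j).natDegree ≤ m)
    (hode : ∀ j z, iteratedDeriv 2 (W j) z + aeval z (P j) * W j z = 0) :
    ∃ (R : ℝ[X]) (w : ℂ → ℂ), R.natDegree ≤ m ∧
      (∀ k, Tendsto (fun j ↦ (P j).coeff k) F (𝓝 (R.coeff k))) ∧ IsRealRootedSolution R w := by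
  obtain ⟨w, hw⟩ := exists_tendstoLocallyUniformlyOn_ultrafilter F hW hbdd
  have hwz : ∀ z, Tendsto (fun j ↦ W j z) F (𝓝 (w z)) := fun z ↦ hw.tendsto_at (Set.mem_univ z)
  have hderiv := tendsto_iteratedDeriv_two hW hw
  have hw0 : ∀ z : ℂ, z.im ≠ 0 → w z ≠ 0 := fun z hz ↦ by
    obtain ⟨c, hc, hcW⟩ := hlow z hz
    exact norm_pos_iff.mp (hc.trans_le (ge_of_tendsto (hwz z).norm (.of_forall hcW)))
  have hP : ∀ z : ℂ, z.im ≠ 0 → ∃ y, Tendsto (fun j ↦ aeval z (P j)) F (𝓝 y) := fun z hz ↦ by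
    refine ⟨-iteratedDeriv 2 w z / w z, ((hderiv z).neg.div (hwz z) (hw0 z hz)).congr fun j ↦ ?_⟩
    obtain ⟨c, hc, hcW⟩ := hlow z hz
    rw [Pi.div_apply, div_eq_iff (norm_pos_iff.mp (hc.trans_le (hcW j)))]
    exact neg_eq_of_add_eq_zero_right (hode j z)
  obtain ⟨R, hR, hcoeff⟩ := exists_tendsto_coeff hdeg hP
  refine ⟨R, w, hR, hcoeff, ?_, ?_, fun z ↦ ?_, fun z hz ↦ not_imp_not.mp (hw0 z) hz⟩
  · exact differentiableOn_univ.mp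
      (hw.differentiableOn (.of_forall fun j ↦ (hW j).differentiableOn) isOpen_univ)
  · rintro rfl
    exact hw0 I (by simp) rfl
  · refine tendsto_nhds_unique ((hderiv z).add
      ((tendsto_aeval_of_tendsto_coeff hdeg hR hcoeff z).mul (hwz z))) ?_
    simp only [hode]
    exact tendsto_const_nhds

end RealRootedSolutions

section OddDegree

open Filter Topology

namespace FeketeConfiguration

variable {n : ℕ} {E : EquilibriumField n} (F : FeketeConfiguration E) {K : ℝ}

/-- The solution attached to a Fekete configuration, rescaled so that it can be bounded on compact
sets independently of the configuration. -/
noncomputable def normalizedSolution (z : ℂ) : ℂ := (F.M : ℂ)⁻¹ * F.solution z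

lemma differentiable_normalizedSolution : Differentiable ℂ F.normalizedSolution :=
  F.differentiable_solution.const_mul _

lemma norm_normalizedSolution (z : ℂ) : ‖F.normalizedSolution z‖ = F.M⁻¹ * ‖F.solution z‖ := by
  rw [normalizedSolution, norm_mul, norm_inv, norm_real, Real.norm_of_nonneg F.M_pos.le]

lemma norm_normalizedSolution_le {r : ℝ} (hK : E.κ ≤ K) {z : ℂ} (hz : ‖z‖ ≤ r) :
    ‖F.normalizedSolution z‖ ≤ 2 * (3 + r) * Real.exp (K * (r + 3) ^ (n + 1) * r) := by
  have := E.κ_pos.le.trans hK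
  have := (norm_nonneg z).trans hz
  rw [norm_normalizedSolution, inv_mul_le_iff₀ F.M_pos]
  calc ‖F.solution z‖
      ≤ 2 * F.M * (3 + ‖z‖) * Real.exp (E.κ * (‖z‖ + 3) ^ (n + 1) * ‖z‖) := F.norm_solution_le z
    _ ≤ 2 * F.M * (3 + r) * Real.exp (K * (r + 3) ^ (n + 1) * r) := by
      have := F.M_pos
      gcongr
    _ = _ := by ring

lemma exists_pos_le_norm_normalizedSolution (n : ℕ) (hK : 0 < K) {z : ℂ} (hz : z.im ≠ 0) :
    ∃ c > 0, ∀ {E : EquilibriumField n} (F : FeketeConfiguration E),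
      E.κ ≤ K → c ≤ ‖F.normalizedSolution z‖ := by
  have hθ : 0 < min 1 |z.im| := lt_min one_pos (abs_pos.mpr hz)
  set θ := min 1 |z.im|
  set D := 3 * (‖z‖ + 4) ^ (2 * n + 5) * Real.exp (K * (‖z‖ + 3) ^ (n + 1) * (‖z‖ + 2)) *
    ((4 * (3 + ‖z‖)) ^ 2 * Real.exp 8) ^ (2 * n + 5) with hD
  refine ⟨θ / (72 * K ^ 2 * 8 ^ (2 * n + 5)) / D, by positivity, fun {E} F hE ↦ ?_⟩
  have hM := F.M_pos
  have hκ := E.κ_pos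
  rw [norm_normalizedSolution, div_le_iff₀ (by positivity)]
  calc θ / (72 * K ^ 2 * 8 ^ (2 * n + 5)) ≤ θ / (72 * E.κ ^ 2 * 8 ^ (2 * n + 5)) := by gcongr
    _ = F.M⁻¹ * (θ * F.M / (72 * E.κ ^ 2 * 8 ^ (2 * n + 5))) := by field_simp
    _ ≤ F.M⁻¹ * (‖F.solution z‖ * D) := by
      gcongr
      refine (F.le_norm_solution hθ (min_le_left _ _) (min_le_right _ _)).trans ?_
      rw [hD]
      gcongr
    _ = F.M⁻¹ * ‖F.solution z‖ * D := (mul_assoc _ _ _).symm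

lemma normalizedSolution_ode {P : ℝ[X]}
    (h : ∀ z, iteratedDeriv 2 F.solution z + aeval z P * F.solution z = 0) (z : ℂ) :
    iteratedDeriv 2 F.normalizedSolution z + aeval z P * F.normalizedSolution z = 0 := by
  have hderiv : iteratedDeriv 2 F.normalizedSolution z =
      (F.M : ℂ)⁻¹ * iteratedDeriv 2 F.solution z := iteratedDeriv_const_mul_field _ _
  rw [hderiv, normalizedSolution]
  linear_combination (F.M : ℂ)⁻¹ * h z

end FeketeConfiguration

lemma exists_forall_ge_mul_exp_lt_one (n : ℕ) : ∃ κ₀ : ℝ, 2 * n + 5 ≤ κ₀ ∧ ∀ κ ≥ κ₀,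
    16 * 3 ^ (n + 1) * ((n + 1) * (n + 2)) * Real.exp (-(κ / (2 * ((n + 1) * (n + 2))))) < 1 := by
  have hlim : Tendsto (fun κ : ℝ ↦ 16 * 3 ^ (n + 1) * ((n + 1) * (n + 2)) *
      Real.exp (-(κ / (2 * ((n + 1) * (n + 2)))))) atTop (𝓝 0) := by
    simpa using (Real.tendsto_exp_neg_atTop_nhds_zero.comp
      (tendsto_id.atTop_div_const (by positivity : (0 : ℝ) < 2 * ((n + 1) * (n + 2))))).const_mul _
  obtain ⟨κ₀, hκ₀⟩ := eventually_atTop.mp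
    ((hlim.eventually (gt_mem_nhds one_pos)).and (eventually_ge_atTop (2 * (n : ℝ) + 5)))
  exact ⟨κ₀, (hκ₀ κ₀ le_rfl).2, fun κ hκ ↦ (hκ₀ κ hκ).1⟩

lemma exists_feketeConfiguration_family (n : ℕ) : ∃ (κ₀ : ℝ) (E : ℕ → EquilibriumField n)
    (F : ∀ j, FeketeConfiguration (E j)), 1 ≤ κ₀ ∧ (∀ j, (E j).ρ = j + 10) ∧
      (∀ j, κ₀ ≤ (E j).κ ∧ (E j).κ ≤ 2 * κ₀) ∧ ∀ j k, 0 < (F j).x k := by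
  obtain ⟨κ₀, hκ₀, hexp⟩ := exists_forall_ge_mul_exp_lt_one n
  choose E hρ hκ hκ' using fun j : ℕ ↦
    EquilibriumField.exists_ρ_eq n hκ₀ (le_add_of_nonneg_left j.cast_nonneg : (10 : ℝ) ≤ j + 10)
  have F : ∀ j, FeketeConfiguration (E j) := fun j ↦ (E j).nonempty_feketeConfiguration.some
  exact ⟨κ₀, E, F, by linarith [n.cast_nonneg (α := ℝ)], hρ, fun j ↦ ⟨hκ j, hκ' j⟩,
    fun j ↦ (F j).x_pos (hexp _ (hκ j))⟩

lemma tendsto_neg_div_sq_atTop_zero {a : ℕ → ℝ} {C : ℝ} (h0 : ∀ j, 0 ≤ a j) (hC : ∀ j, a j ≤ C) :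
    Tendsto (fun j ↦ -(a j / (j + 10)) ^ 2) atTop (𝓝 0) := by
  have hdiv : Tendsto (fun j : ℕ ↦ a j / ((j : ℝ) + 10)) atTop (𝓝 0) :=
    squeeze_zero (fun j ↦ div_nonneg (h0 j) (by positivity))
      (fun j ↦ div_le_div_of_nonneg_right (hC j) (by positivity))
      ((tendsto_atTop_add_const_right _ _ tendsto_natCast_atTop_atTop).const_div_atTop C)
  simpa using (hdiv.pow 2).neg

lemma exists_isRealRootedSolution_odd (n : ℕ) :
    ∃ (P : ℝ[X]) (w : ℂ → ℂ), P.degree = (2 * n + 1 : ℕ) ∧ IsRealRootedSolution P w := by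
  obtain ⟨κ₀, E, F, hκ₀, hρ, hκ, hpos⟩ := exists_feketeConfiguration_family n
  choose P hdeg htop hsub hode using fun j ↦ (F j).exists_ode (hpos j)
  have hl : (hyperfilter ℕ : Filter ℕ) ≤ atTop := Nat.hyperfilter_le_atTop
  obtain ⟨R, w, hR, hcoeff, hw⟩ := exists_isRealRootedSolution_tendsto (hyperfilter ℕ)
    (fun j ↦ (F j).differentiable_normalizedSolution)
    (fun r ↦ ⟨_, fun j z hz ↦ (F j).norm_normalizedSolution_le (hκ j).2 hz⟩)
    (fun z hz ↦ by
      obtain ⟨c, hc, hcF⟩ := FeketeConfiguration.exists_pos_le_norm_normalizedSolution n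
        (by linarith : 0 < 2 * κ₀) hz
      exact ⟨c, hc, fun j ↦ hcF (F j) (hκ j).2⟩)
    hdeg (fun j ↦ (F j).normalizedSolution_ode (hode j))
  have hR0 : R.coeff (2 * n + 2) = 0 := by
    have hlim := tendsto_neg_div_sq_atTop_zero (fun j ↦ (E j).κ_pos.le) fun j ↦ (hκ j).2
    refine tendsto_nhds_unique (hcoeff _) ((hlim.mono_left hl).congr fun j ↦ ?_)
    rw [htop, hρ]
  have hR1 : 1 ≤ R.coeff (2 * n + 1) := ge_of_tendsto (hcoeff _) (.of_forall fun j ↦ by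
    rw [hsub]
    nlinarith [(hκ j).1])
  refine ⟨R, w, le_antisymm ?_ (le_degree_of_ne_zero (by linarith)), hw⟩
  refine degree_le_of_natDegree_le (Nat.le_of_lt_succ ((Nat.lt_of_le_of_ne hR) fun h ↦ ?_))
  have hR_ne : R ≠ 0 := ne_zero_of_natDegree_gt (n := 0) (by lia)
  exact hR_ne (leadingCoeff_eq_zero.mp (by rw [leadingCoeff, h, hR0]))

end OddDegree

section EvenDegree

lemma degree_derivative_derivative_X_pow_add (k : ℕ) :
    (derivative (derivative (X ^ (k + 1) : ℝ[X])) + derivative (X ^ (k + 1) : ℝ[X]) ^ 2).degree =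
      ((2 * k : ℕ) : WithBot ℕ) := by
  have hX : (derivative (X ^ (k + 1) : ℝ[X])).degree = k := by
    rw [derivative_X_pow, add_tsub_cancel_right, degree_C_mul_X_pow _ (by positivity)]
  have hpow : (derivative (X ^ (k + 1) : ℝ[X]) ^ 2).degree = (2 * k : ℕ) := by
    rw [degree_pow, hX, nsmul_eq_mul, Nat.cast_mul, Nat.cast_ofNat]
  rw [degree_add_eq_right_of_degree_lt, hpow]
  have hne : derivative (X ^ (k + 1) : ℝ[X]) ≠ 0 := fun h ↦ by simp [h] at hX
  rw [hpow]
  refine (degree_derivative_lt hne).trans_le ?_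
  rw [hX]
  exact_mod_cast (by lia : k ≤ 2 * k)

lemma exists_isRealRootedSolution_even (k : ℕ) :
    ∃ (P : ℝ[X]) (w : ℂ → ℂ), P.degree = (2 * k : ℕ) ∧ IsRealRootedSolution P w := by
  set Q : ℝ[X] := X ^ (k + 1)
  refine ⟨-(derivative (derivative Q) + derivative Q ^ 2),
    fun z ↦ exp (aeval z Q) * aeval z (1 : ℝ[X]), ?_, ?_, fun h ↦ ?_, fun z ↦ ?_, fun z hz ↦ ?_⟩
  · rw [degree_neg, degree_derivative_derivative_X_pow_add]
  · exact fun z ↦ (hasDerivAt_exp_aeval_mul_aeval Q 1 z).differentiableAt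
  · simpa using congrFun h 0
  · rw [iteratedDeriv_two_exp_aeval_mul_aeval]
    simp only [derivative_one, map_zero, map_one, map_add, map_neg, mul_one, mul_zero, zero_add]
    ring
  · simp at hz

end EvenDegree

lemma exists_isRealRootedSolution (d : ℕ) :
    ∃ (P : ℝ[X]) (w : ℂ → ℂ), P.degree = d ∧ IsRealRootedSolution P w := by
  rcases Nat.even_or_odd' d with ⟨k, rfl | rfl⟩
  · exact exists_isRealRootedSolution_even k
  · exact exists_isRealRootedSolution_odd k

end FeketeODE

/-- For every natural number `d`, there exist a real polynomial `P` of degree `d` and a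
nonzero entire function `w` satisfying `w'' + P·w = 0` whose zeros are all real. -/
theorem stmt_0 (d : ℕ) :
    ∃ (P : Polynomial ℂ) (w : ℂ → ℂ),
      P.degree = (d : ℕ) ∧
      (∀ n, (P.coeff n).im = 0) ∧
      Differentiable ℂ w ∧
      w ≠ 0 ∧
      (∀ z : ℂ, iteratedDeriv 2 w z + P.eval z * w z = 0) ∧
      (∀ z : ℂ, w z = 0 → z.im = 0) := by
  obtain ⟨P, w, hdeg, hw⟩ := FeketeODE.exists_isRealRootedSolution d
  refine ⟨P.map (algebraMap ℝ ℂ), w, (degree_map P _).trans hdeg, fun n ↦ ?_, hw.differentiable,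
    hw.ne_zero, fun z ↦ ?_, hw.im_eq_zero⟩
  · rw [coeff_map, coe_algebraMap, ofReal_im]
  · rw [eval_map_algebraMap, hw.ode]
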